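/- arXiv:2304.14169 — 3 statements merged into one kernel-verified Lean document; each statement's English description precedes it below -/
import Mathlib

section
/- For every α ∈ (0, 1] there is a constant c > 0, depending only on α, such that for all d ∈ ℕ, all integers m ≥ 2, and every f ∈ F_d^α, the Fourier partial sum over Λ = [-m, m]^d ∩ ℤ^d satisfies ‖f − P_Λ f‖_∞ ≤ (c · log m)^d · m^{-α}; consequently, there is a constant c' > 0 depending only on α with log N^∞(ε, F_d^α) ≤ c' · d² · log²(d) · log(ε^{-1}) for all d ≥ 2 and ε ∈ (0, 1/2). -/
open MeasureTheory Real Finset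

noncomputable section

/-- The unit cube `[0,1]^d`. -/
def cube (d : ℕ) : Set (Fin d → ℝ) := Set.univ.pi fun _ => Set.Icc 0 1

/-- The trigonometric character `e^{2πi⟨k,x⟩}`. -/
def eK (d : ℕ) (k : Fin d → ℤ) (x : Fin d → ℝ) : ℂ :=
  Complex.exp (2 * Real.pi * Complex.I * ∑ i, (k i : ℂ) * (x i : ℂ))

/-- The Fourier coefficient `f̂(k) = ∫_{[0,1]^d} f(x) e^{-2πi⟨k,x⟩} dx`. -/
def fCoeff (d : ℕ) (f : (Fin d → ℝ) → ℂ) (k : Fin d → ℤ) : ℂ :=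
  ∫ x in cube d, f x * Complex.exp (-(2 * Real.pi * Complex.I) * ∑ i, (k i : ℂ) * (x i : ℂ))

/-- `f` is 1-periodic in each coordinate. -/
def Periodic1 (d : ℕ) (f : (Fin d → ℝ) → ℂ) : Prop :=
  ∀ (x : Fin d → ℝ) (i : Fin d), f (Function.update x i (x i + 1)) = f x

/-- The weight `max(1, log ‖k‖_∞)`. -/
def logWeight (d : ℕ) (k : Fin d → ℤ) : ℝ :=
  max 1 (Real.log ((Finset.univ.sup fun i => (k i).natAbs : ℕ) : ℝ))

/-- The class `F_d^log` of continuous 1-periodic functions with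
`∑_k |f̂(k)| max(1, log ‖k‖_∞) ≤ 1`. -/
def FdLog (d : ℕ) : Set ((Fin d → ℝ) → ℂ) :=
  {f | Continuous f ∧ Periodic1 d f ∧
    Summable (fun k : Fin d → ℤ => ‖fCoeff d f k‖ * logWeight d k) ∧
    ∑' k : Fin d → ℤ, ‖fCoeff d f k‖ * logWeight d k ≤ 1}

/-- The Hölder class `F_d^α`: continuous 1-periodic functions with absolutely summable
Fourier coefficients, `∑_k |f̂(k)| ≤ 1`, that are `α`-Hölder with constant 1 with respect
to the Euclidean norm on `ℝ^d`. -/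
def FdAlpha (α : ℝ) (d : ℕ) : Set ((Fin d → ℝ) → ℂ) :=
  {f | Continuous f ∧ Periodic1 d f ∧
    Summable (fun k : Fin d → ℤ => ‖fCoeff d f k‖) ∧
    (∑' k : Fin d → ℤ, ‖fCoeff d f k‖) ≤ 1 ∧
    ∀ x y : Fin d → ℝ, ‖f x - f y‖ ≤ Real.sqrt (∑ i, (x i - y i) ^ 2) ^ α}

/-- The cube of frequencies `[-m, m]^d ∩ ℤ^d`. -/
def boxZ (d m : ℕ) : Finset (Fin d → ℤ) :=
  Fintype.piFinset fun _ : Fin d => Finset.Icc (-(m : ℤ)) m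

/-!
On the torus the operator `f ↦ P_Λ f` for `Λ = [-m, m]^d` is the product of the one-dimensional
Dirichlet convolutions `D_j` along the coordinates, each of norm at most `6 log m`, so by
telescoping it suffices to bound every `‖f - D_j f‖`. The Jackson convolution `J_j` of degree at
most `m` satisfies `D_j J_j = J_j`, hence `‖f - D_j f‖ ≤ (1 + ‖D_j‖) ‖f - J_j f‖`, and the Jackson
kernel is concentrated near `0` at scale `m⁻¹`, so that `‖f - J_j f‖ ≤ C m ^ (-α)`. Only the Hölder
condition along each coordinate direction enters. Identities between the operators are checked on
the characters, whose span is dense.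

For the count of frequencies, `(c log m) ^ d` is absorbed into `m ^ (α / 2)` at the price of a
factor `(2 c d / α) ^ d`, and `m` is chosen with `log m` comparable to `d log d + log ε⁻¹`.
-/

section ExponentialSums

variable {T : ℝ}

/-- The exponential sum with frequency set `A`; for `A = [-r, r]` it is the Dirichlet kernel. -/
def expSum (A : Finset ℤ) : C(AddCircle T, ℂ) := ∑ n ∈ A, fourier n

lemma norm_fourier_apply (n : ℤ) (t : AddCircle T) : ‖fourier n t‖ = 1 := by
  rw [fourier_apply, Circle.norm_coe]

lemma star_expSum_mul_expSum (A : Finset ℤ) :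
    star (expSum A : C(AddCircle T, ℂ)) * expSum A = ∑ p ∈ A ×ˢ A, fourier (p.2 - p.1) := by
  ext t
  simp only [expSum, star_sum, sum_mul_sum, sum_product, ContinuousMap.coe_sum, Finset.sum_apply,
    ContinuousMap.mul_apply, ContinuousMap.star_apply]
  refine sum_congr rfl fun a _ => sum_congr rfl fun b _ => ?_
  rw [sub_eq_neg_add, fourier_add, fourier_neg]
  rfl

lemma star_expSum_mul_expSum_sq (A : Finset ℤ) :
    (star (expSum A : C(AddCircle T, ℂ)) * expSum A) ^ 2 =
      ∑ p ∈ (A ×ˢ A) ×ˢ A ×ˢ A, fourier ((p.1.2 - p.1.1) + (p.2.2 - p.2.1)) := by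
  rw [star_expSum_mul_expSum, sq, sum_mul_sum, ← sum_product']
  refine sum_congr rfl fun p _ => ?_
  ext t
  exact fourier_add.symm

lemma star_expSum_mul_expSum_apply (A : Finset ℤ) (t : AddCircle T) :
    (star (expSum A) * expSum A : C(AddCircle T, ℂ)) t = ((‖expSum A t‖ ^ 2 : ℝ) : ℂ) := by
  rw [Complex.ofReal_pow, ← Complex.conj_mul']
  rfl

lemma norm_expSum_apply_le (A : Finset ℤ) (t : AddCircle T) : ‖expSum A t‖ ≤ #A := by
  rw [expSum, ContinuousMap.sum_apply]
  exact (norm_sum_le _ _).trans_eq (by simp only [norm_fourier_apply, sum_const, nsmul_one])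

variable [hT : Fact (0 < T)]

lemma fourierCoeff_sum_fourier {ι : Type*} (s : Finset ι) (φ : ι → ℤ) (k : ℤ) :
    fourierCoeff (∑ i ∈ s, fourier (φ i) : C(AddCircle T, ℂ)) k = #{i ∈ s | φ i = k} := by
  have h_int : ∀ i ∈ s, Integrable (fourier (φ i) : AddCircle T → ℂ) AddCircle.haarAddCircle :=
    fun _ _ => (map_continuous _).integrable_of_hasCompactSupport (.of_compactSpace _)
  rw [ContinuousMap.coe_sum, fourierCoeff.sum _ _ h_int]
  simp [fourierCoeff_fourier, Pi.single_apply, eq_comm (a := k)]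

lemma fourierCoeff_expSum (A : Finset ℤ) (k : ℤ) :
    fourierCoeff (expSum A : C(AddCircle T, ℂ)) k = if k ∈ A then 1 else 0 := by
  rw [expSum, fourierCoeff_sum_fourier A (fun n => n), filter_eq']
  split_ifs <;> simp

lemma integral_eq_fourierCoeff_zero (f : AddCircle T → ℂ) :
    ∫ t, f t ∂AddCircle.haarAddCircle = fourierCoeff f 0 := by
  simp [fourierCoeff]

lemma integral_norm_expSum_sq (A : Finset ℤ) :
    ∫ t : AddCircle T, ‖expSum A t‖ ^ 2 ∂AddCircle.haarAddCircle = #A := by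
  have h : ((∫ t : AddCircle T, ‖expSum A t‖ ^ 2 ∂AddCircle.haarAddCircle : ℝ) : ℂ) = #A := by
    rw [← integral_complex_ofReal]
    simp_rw [← star_expSum_mul_expSum_apply]
    rw [integral_eq_fourierCoeff_zero, star_expSum_mul_expSum, fourierCoeff_sum_fourier]
    simp only [sub_eq_zero, eq_comm (a := Prod.snd _)]
    rw [← diag_eq_filter, diag_card]
  exact_mod_cast h

lemma fourierCoeff_star_expSum_mul_expSum_sq_zero (A : Finset ℤ) :
    fourierCoeff ((star (expSum A) * expSum A) ^ 2 : C(AddCircle T, ℂ)) 0 = addEnergy A A := by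
  rw [star_expSum_mul_expSum_sq, fourierCoeff_sum_fourier, addEnergy]
  congr 2
  ext p
  simp only [mem_filter, and_congr_right_iff]
  omega

end ExponentialSums

section DirichletKernel

/-- The Dirichlet kernel `∑_{|n| ≤ r} e_n` on `ℝ / ℤ`. -/
def dirichlet (r : ℕ) : C(UnitAddCircle, ℂ) := expSum (Icc (-(r : ℤ)) r)

lemma card_Icc_neg_natCast (r : ℕ) : #(Icc (-(r : ℤ)) r) = 2 * r + 1 := by
  rw [Int.card_Icc]
  omega

lemma norm_coe_unitAddCircle_of_abs_le {s : ℝ} (hs : |s| ≤ 1 / 2) :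
    ‖(s : UnitAddCircle)‖ = |s| :=
  (AddCircle.norm_coe_eq_abs_iff 1 one_ne_zero).2 (by simpa using hs)

lemma exists_abs_le_half_coe_eq (t : UnitAddCircle) :
    ∃ s : ℝ, |s| ≤ 1 / 2 ∧ (s : UnitAddCircle) = t := by
  induction t using QuotientAddGroup.induction_on with | _ t
  exact ⟨t - round t, abs_sub_round t, by simp⟩

lemma four_mul_norm_le_norm_fourier_one_sub_one (t : UnitAddCircle) :
    4 * ‖t‖ ≤ ‖fourier 1 t - 1‖ := by
  obtain ⟨s, hs, rfl⟩ := exists_abs_le_half_coe_eq t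
  have h_exp : fourier 1 (s : UnitAddCircle) = Complex.exp (Complex.I * ((2 * π * s : ℝ) : ℂ)) := by
    rw [fourier_coe_apply]
    congr 1
    push_cast
    ring
  have h_sin : 2 / π * (π * |s|) ≤ |sin (π * s)| := by
    rw [← abs_of_pos pi_pos, ← abs_mul, abs_of_pos pi_pos]
    refine mul_abs_le_abs_sin ?_
    rw [abs_mul, abs_of_pos pi_pos]
    nlinarith [pi_pos]
  rw [← mul_assoc, div_mul_cancel₀ _ pi_ne_zero] at h_sin
  rw [norm_coe_unitAddCircle_of_abs_le hs, h_exp, Complex.norm_exp_I_mul_ofReal_sub_one, norm_mul,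
    norm_eq_abs, norm_eq_abs, abs_two, mul_assoc 2 π s, mul_div_cancel_left₀ _ two_ne_zero]
  linarith

lemma dirichlet_mul_fourier_one_sub_one (r : ℕ) (t : UnitAddCircle) :
    dirichlet r t * (fourier 1 t - 1) = fourier (r + 1) t - fourier (-r) t := by
  have h : ∀ n : ℤ, fourier n t * (fourier 1 t - 1) = fourier (n + 1) t - fourier n t :=
    fun n => by rw [fourier_add]; ring
  rw [dirichlet, expSum, ContinuousMap.sum_apply, sum_mul, sum_congr rfl fun n _ => h n]
  induction r with
  | zero => simp
  | succ r ih =>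
    have h_Icc : Icc (-((r + 1 : ℕ) : ℤ)) (r + 1 : ℕ) =
        insert (-((r + 1 : ℕ) : ℤ)) (insert ((r + 1 : ℕ) : ℤ) (Icc (-(r : ℤ)) r)) := by
      ext n
      simp only [mem_insert, mem_Icc]
      omega
    rw [h_Icc, sum_insert (by simp; omega), sum_insert (by simp), ih]
    push_cast
    rw [neg_add_rev, neg_add_cancel_comm]
    ring

lemma norm_dirichlet_apply_le (r : ℕ) (t : UnitAddCircle) : ‖dirichlet r t‖ ≤ 2 * r + 1 := by
  have := norm_expSum_apply_le (Icc (-(r : ℤ)) r) t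
  rw [card_Icc_neg_natCast] at this
  exact_mod_cast this

lemma norm_dirichlet_apply_mul_norm_le (r : ℕ) (t : UnitAddCircle) :
    ‖dirichlet r t‖ * ‖t‖ ≤ 1 / 2 := by
  have h_two : ‖dirichlet r t‖ * ‖fourier 1 t - 1‖ ≤ 2 := by
    rw [← norm_mul, dirichlet_mul_fourier_one_sub_one]
    refine (norm_sub_le _ _).trans_eq ?_
    rw [norm_fourier_apply, norm_fourier_apply, one_add_one_eq_two]
  have h_four : ‖dirichlet r t‖ * (4 * ‖t‖) ≤ ‖dirichlet r t‖ * ‖fourier 1 t - 1‖ := by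
    gcongr
    exact four_mul_norm_le_norm_fourier_one_sub_one t
  linarith

lemma fourierCoeff_dirichlet (r : ℕ) (k : ℤ) :
    fourierCoeff (dirichlet r) k = if k ∈ Icc (-(r : ℤ)) r then 1 else 0 :=
  fourierCoeff_expSum _ k

lemma integral_comp_norm_unitAddCircle (φ : ℝ → ℝ) :
    ∫ t : UnitAddCircle, φ ‖t‖ ∂AddCircle.haarAddCircle = ∫ s in (-(1 / 2) : ℝ)..1 / 2, φ |s| := by
  rw [AddCircle.integral_haarAddCircle, inv_one, one_smul,
    ← UnitAddCircle.intervalIntegral_preimage (-(1 / 2))]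
  rw [show -(1 / 2) + 1 = (1 / 2 : ℝ) by norm_num]
  refine intervalIntegral.integral_congr fun s hs => ?_
  rw [Set.uIcc_of_le (by norm_num)] at hs
  simp only [norm_coe_unitAddCircle_of_abs_le (abs_le.2 hs)]

lemma integral_div_one_add_mul_abs {N a : ℝ} (hN : 0 ≤ N) (ha : 0 ≤ a) :
    ∫ s in -a..a, N / (1 + N * |s|) = 2 * log (1 + N * a) := by
  have h_pos : ∀ s, 0 < 1 + N * |s| := fun s => by positivity
  have h_cont : Continuous fun s : ℝ => N / (1 + N * |s|) :=
    continuous_const.div (by fun_prop) fun s => (h_pos s).ne'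
  have h_half : ∫ s in (0 : ℝ)..a, N / (1 + N * |s|) = log (1 + N * a) := by
    have h_deriv : ∀ s ∈ Set.uIcc 0 a,
        HasDerivAt (fun s => log (1 + N * s)) (N / (1 + N * |s|)) s := by
      intro s hs
      rw [Set.uIcc_of_le ha] at hs
      have h_ne := (h_pos s).ne'
      rw [abs_of_nonneg hs.1] at h_ne ⊢
      simpa using (((hasDerivAt_id s).const_mul N).const_add 1).log h_ne
    rw [intervalIntegral.integral_eq_sub_of_hasDerivAt h_deriv (h_cont.intervalIntegrable _ _)]
    simp
  have h_neg := intervalIntegral.integral_comp_neg (a := 0) (b := a) fun s => N / (1 + N * |s|)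
  simp only [abs_neg, neg_zero] at h_neg
  rw [← intervalIntegral.integral_add_adjacent_intervals (h_cont.intervalIntegrable _ 0)
    (h_cont.intervalIntegrable _ _), ← h_neg, h_half, two_mul]

lemma integral_norm_dirichlet_le {m : ℕ} (hm : 2 ≤ m) :
    ∫ t, ‖dirichlet m t‖ ∂AddCircle.haarAddCircle ≤ 6 * log m := by
  have hm' : (2 : ℝ) ≤ m := by exact_mod_cast hm
  set N : ℝ := 2 * m + 1
  have h_pos : ∀ t : UnitAddCircle, 0 < 1 + N * ‖t‖ := fun t => by positivity
  have h_bound : ∀ t, ‖dirichlet m t‖ ≤ 3 / 2 * (N / (1 + N * ‖t‖)) := by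
    intro t
    rw [← mul_div_assoc, le_div_iff₀ (h_pos t)]
    have h_far := mul_le_mul_of_nonneg_left (norm_dirichlet_apply_mul_norm_le m t)
      (by positivity : 0 ≤ N)
    have h_near : ‖dirichlet m t‖ ≤ N := norm_dirichlet_apply_le m t
    linarith
  calc ∫ t, ‖dirichlet m t‖ ∂AddCircle.haarAddCircle
      ≤ ∫ t : UnitAddCircle, 3 / 2 * (N / (1 + N * ‖t‖)) ∂AddCircle.haarAddCircle := by
        refine integral_mono ?_ ?_ h_bound
        · exact (map_continuous (dirichlet m)).norm.integrable_of_hasCompactSupport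
            (.of_compactSpace _)
        · refine Continuous.integrable_of_hasCompactSupport ?_ (.of_compactSpace _)
          exact continuous_const.mul
            (continuous_const.div (by fun_prop) fun t => (h_pos t).ne')
    _ = 3 * log (1 + N * (1 / 2)) := by
        rw [integral_comp_norm_unitAddCircle fun s => 3 / 2 * (N / (1 + N * s)),
          intervalIntegral.integral_const_mul, integral_div_one_add_mul_abs (by positivity)
          (by norm_num)]
        ring
    _ ≤ 3 * log (m ^ 2) := by
        gcongr
        nlinarith
    _ = 6 * log m := by
        rw [log_pow]
        push_cast
        ring

end DirichletKernel

section JacksonKernel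

lemma sq_mul_rpow_le {G N s α : ℝ} (hG : 0 ≤ G) (hGN : G ≤ N) (hs : 0 ≤ s) (hGs : G * s ≤ 1)
    (h0 : 0 ≤ α) (h2 : α ≤ 2) : G ^ 2 * s ^ α ≤ N ^ (2 - α) := by
  have h_split : G ^ 2 = G ^ (2 - α) * G ^ α := by
    rw [← rpow_add_of_nonneg hG (by linarith) h0, sub_add_cancel, rpow_two]
  calc G ^ 2 * s ^ α = G ^ (2 - α) * (G * s) ^ α := by rw [h_split, mul_rpow hG hs, mul_assoc]
    _ ≤ N ^ (2 - α) * 1 := by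
        gcongr
        · exact rpow_nonneg (hG.trans hGN) _
        · exact rpow_le_one (by positivity) hGs h0
    _ = N ^ (2 - α) := mul_one _

lemma cube_le_two_mul_addEnergy_Icc (r : ℕ) :
    (2 * r + 1) ^ 3 ≤ 2 * addEnergy (Icc (-(r : ℤ)) r) (Icc (-(r : ℤ)) r) := by
  set A := Icc (-(r : ℤ)) r
  have h_sums : {p ∈ A ×ˢ A | p.1 + p.2 ∈ Icc (-((2 * r : ℕ) : ℤ)) (2 * r : ℕ)} = A ×ˢ A := by
    refine filter_true_of_mem fun p hp => ?_
    simp only [A, mem_product, mem_Icc] at *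
    omega
  have h_energy := card_sq_le_card_mul_addEnergy A A (Icc (-((2 * r : ℕ) : ℤ)) (2 * r : ℕ))
  rw [h_sums, card_product, card_Icc_neg_natCast, card_Icc_neg_natCast] at h_energy
  refine le_of_mul_le_mul_left ?_ (by omega : 0 < 2 * r + 1)
  calc (2 * r + 1) * (2 * r + 1) ^ 3 = ((2 * r + 1) * (2 * r + 1)) ^ 2 := by ring
    _ ≤ (2 * (2 * r) + 1) * addEnergy A A := h_energy
    _ ≤ (2 * (2 * r + 1)) * addEnergy A A := by gcongr; omega
    _ = (2 * r + 1) * (2 * addEnergy A A) := by ring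

/-- The Jackson kernel, the fourth power of the modulus of the Dirichlet kernel divided by its
integral; by Parseval the latter is the additive energy of `[-r, r]`. -/
def jackson (r : ℕ) : C(UnitAddCircle, ℂ) :=
  (addEnergy (Icc (-(r : ℤ)) r) (Icc (-(r : ℤ)) r) : ℂ)⁻¹ • (star (dirichlet r) * dirichlet r) ^ 2

lemma norm_jackson_apply (r : ℕ) (t : UnitAddCircle) :
    ‖jackson r t‖ =
      (addEnergy (Icc (-(r : ℤ)) r) (Icc (-(r : ℤ)) r) : ℝ)⁻¹ * (‖dirichlet r t‖ ^ 2) ^ 2 := by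
  simp [jackson, ← sq]

lemma addEnergy_Icc_pos (r : ℕ) : 0 < addEnergy (Icc (-(r : ℤ)) r) (Icc (-(r : ℤ)) r) := by
  simp [addEnergy_pos_iff]

lemma fourierCoeff_jackson_zero (r : ℕ) : fourierCoeff (jackson r) 0 = 1 := by
  rw [jackson, ContinuousMap.coe_smul, fourierCoeff.const_smul, dirichlet,
    fourierCoeff_star_expSum_mul_expSum_sq_zero, smul_eq_mul, inv_mul_cancel₀]
  exact_mod_cast (addEnergy_Icc_pos r).ne'

lemma fourierCoeff_jackson_eq_zero {r : ℕ} {k : ℤ} (hk : 4 * (r : ℤ) < |k|) :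
    fourierCoeff (jackson r) k = 0 := by
  rw [jackson, ContinuousMap.coe_smul, fourierCoeff.const_smul, dirichlet,
    star_expSum_mul_expSum_sq, fourierCoeff_sum_fourier, filter_false_of_mem]
  · simp
  · rintro p hp rfl
    simp only [mem_product, mem_Icc] at hp
    rw [lt_abs] at hk
    omega

lemma integral_norm_jackson_mul_rpow_le {α : ℝ} (h0 : 0 ≤ α) (h2 : α ≤ 2) (r : ℕ) :
    ∫ t, ‖jackson r t‖ * ‖t‖ ^ α ∂AddCircle.haarAddCircle ≤ 2 * (2 * r + 1 : ℝ) ^ (-α) := by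
  set E := (addEnergy (Icc (-(r : ℤ)) r) (Icc (-(r : ℤ)) r) : ℝ)
  set N : ℝ := 2 * r + 1
  have hN : 0 < N := by positivity
  have hE : 0 < E := Nat.cast_pos.2 (addEnergy_Icc_pos r)
  have h_energy : N ^ (3 : ℝ) ≤ 2 * E := by
    rw [← Nat.cast_ofNat, rpow_natCast]
    simp only [N, E]
    exact_mod_cast cube_le_two_mul_addEnergy_Icc r
  have h_point (t : UnitAddCircle) :
      ‖jackson r t‖ * ‖t‖ ^ α ≤ E⁻¹ * N ^ (2 - α) * ‖dirichlet r t‖ ^ 2 := by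
    have h_tail := sq_mul_rpow_le (norm_nonneg _) (norm_dirichlet_apply_le r t) (norm_nonneg t)
      ((norm_dirichlet_apply_mul_norm_le r t).trans (by norm_num)) h0 h2
    calc ‖jackson r t‖ * ‖t‖ ^ α
        = E⁻¹ * (‖dirichlet r t‖ ^ 2 * ‖t‖ ^ α) * ‖dirichlet r t‖ ^ 2 := by
          rw [norm_jackson_apply]
          ring
      _ ≤ E⁻¹ * N ^ (2 - α) * ‖dirichlet r t‖ ^ 2 := by gcongr
  calc ∫ t, ‖jackson r t‖ * ‖t‖ ^ α ∂AddCircle.haarAddCircle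
      ≤ ∫ t, E⁻¹ * N ^ (2 - α) * ‖dirichlet r t‖ ^ 2 ∂AddCircle.haarAddCircle := by
        refine integral_mono ?_ ?_ h_point
        · exact Continuous.integrable_of_hasCompactSupport (by fun_prop (disch := assumption))
            (.of_compactSpace _)
        · exact Continuous.integrable_of_hasCompactSupport (by fun_prop) (.of_compactSpace _)
    _ = E⁻¹ * (N ^ (2 - α) * N ^ (1 : ℝ)) := by
        rw [integral_const_mul, dirichlet, integral_norm_expSum_sq, card_Icc_neg_natCast, rpow_one,
          mul_assoc]
        push_cast
        rfl
    _ = E⁻¹ * (N ^ (3 : ℝ) * N ^ (-α)) := by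
        rw [← rpow_add hN, ← rpow_add hN]
        ring_nf
    _ ≤ E⁻¹ * (2 * E * N ^ (-α)) := by gcongr
    _ = 2 * N ^ (-α) := by field_simp

end JacksonKernel

section FourierMultipliers

open UnitAddTorus

-- Mathlib states its results on `UnitAddTorus` for this measure, an instance local to its files.
local instance : MeasureSpace UnitAddCircle := ⟨AddCircle.haarAddCircle⟩

local instance : IsProbabilityMeasure (volume : Measure UnitAddCircle) :=
  inferInstanceAs (IsProbabilityMeasure AddCircle.haarAddCircle)

variable {ι : Type*} [Fintype ι]

/-- The bounded operator `T` on `C(𝕋^ι)` is the Fourier multiplier with symbol `μ`. -/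
def IsFourierMultiplier (T : C(UnitAddTorus ι, ℂ) →L[ℂ] C(UnitAddTorus ι, ℂ))
    (μ : (ι → ℤ) → ℂ) : Prop :=
  ∀ k, T (mFourier k) = μ k • mFourier k

namespace IsFourierMultiplier

variable {S T : C(UnitAddTorus ι, ℂ) →L[ℂ] C(UnitAddTorus ι, ℂ)} {μ ν : (ι → ℤ) → ℂ}

lemma unique (hS : IsFourierMultiplier S μ) (hT : IsFourierMultiplier T μ) : S = T := by
  refine ContinuousLinearMap.ext_on (s := Set.range mFourier) ?_ ?_
  · exact Submodule.dense_iff_topologicalClosure_eq_top.2 span_mFourier_closure_eq_top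
  · rintro _ ⟨k, rfl⟩
    rw [hS k, hT k]

lemma one : IsFourierMultiplier (1 : C(UnitAddTorus ι, ℂ) →L[ℂ] C(UnitAddTorus ι, ℂ)) 1 :=
  fun k => (one_smul ℂ (mFourier k)).symm

lemma mul (hS : IsFourierMultiplier S μ) (hT : IsFourierMultiplier T ν) :
    IsFourierMultiplier (S * T) (μ * ν) := fun k => by
  rw [mul_apply_eq_comp, hT k, map_smul, hS k, smul_smul, Pi.mul_apply, mul_comm]

lemma list_prod {κ : Type*} {T : κ → C(UnitAddTorus ι, ℂ) →L[ℂ] C(UnitAddTorus ι, ℂ)}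
    {μ : κ → (ι → ℤ) → ℂ} (h : ∀ j, IsFourierMultiplier (T j) (μ j)) (l : List κ) :
    IsFourierMultiplier (l.map T).prod (l.map μ).prod := by
  induction l with
  | nil => exact one
  | cons j l ih => exact (h j).mul ih

end IsFourierMultiplier

/-- The `k`-th Fourier coefficient as a bounded functional on `C(𝕋^ι)`. -/
def mFourierCoeffCLM (k : ι → ℤ) : C(UnitAddTorus ι, ℂ) →L[ℂ] ℂ :=
  innerSL ℂ (mFourierLp 2 k) ∘L ContinuousMap.toLp 2 volume ℂ

lemma mFourierCoeffCLM_apply (k : ι → ℤ) (f : C(UnitAddTorus ι, ℂ)) :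
    mFourierCoeffCLM k f = mFourierCoeff f k := by
  rw [mFourierCoeff, mFourierCoeffCLM, ContinuousLinearMap.comp_apply, innerSL_apply_apply,
    ContinuousMap.inner_toLp]
  simp_rw [← mFourier_neg, smul_eq_mul, mul_comm]

lemma mFourierCoeffCLM_mFourier (k n : ι → ℤ) :
    mFourierCoeffCLM k (mFourier n) = if k = n then 1 else 0 :=
  orthonormal_iff_ite.1 orthonormal_mFourier k n

/-- The Fourier partial sum operator `f ↦ ∑ k ∈ Λ, f̂(k) e_k` on `C(𝕋^ι)`. -/
def fourierPartialSum (Λ : Finset (ι → ℤ)) : C(UnitAddTorus ι, ℂ) →L[ℂ] C(UnitAddTorus ι, ℂ) :=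
  ∑ k ∈ Λ, (mFourierCoeffCLM k).smulRight (mFourier k)

lemma fourierPartialSum_apply (Λ : Finset (ι → ℤ)) (f : C(UnitAddTorus ι, ℂ))
    (x : UnitAddTorus ι) :
    fourierPartialSum Λ f x = ∑ k ∈ Λ, mFourierCoeff f k * mFourier k x := by
  simp [fourierPartialSum, mFourierCoeffCLM_apply]

lemma isFourierMultiplier_fourierPartialSum (Λ : Finset (ι → ℤ)) :
    IsFourierMultiplier (fourierPartialSum Λ) fun k => if k ∈ Λ then 1 else 0 := fun k => by
  -- `simp` is unable to apply `zero_smul` to this scalar action.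
  have h_zero : (0 : ℂ) • mFourier k = 0 := ContinuousMap.ext fun x => zero_mul (mFourier k x)
  simp [fourierPartialSum, mFourierCoeffCLM_mFourier, h_zero]

end FourierMultipliers

section CoordinateConvolution

open UnitAddTorus

variable {ι : Type*} [DecidableEq ι]

/-- The translate `x ↦ f (x - t e_j)` of a function on `𝕋^ι` along the `j`-th coordinate. -/
def coordTranslate (j : ι) (t : UnitAddCircle) (f : C(UnitAddTorus ι, ℂ)) : C(UnitAddTorus ι, ℂ) :=
  f.comp ⟨fun x => x - Pi.single j t, by fun_prop⟩

lemma coordTranslate_apply (j : ι) (t : UnitAddCircle) (f : C(UnitAddTorus ι, ℂ))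
    (x : UnitAddTorus ι) : coordTranslate j t f x = f (x - Pi.single j t) :=
  rfl

lemma norm_coordTranslate_le (j : ι) (t : UnitAddCircle) (f : C(UnitAddTorus ι, ℂ)) :
    ‖coordTranslate j t f‖ ≤ ‖f‖ :=
  (ContinuousMap.norm_le _ (norm_nonneg f)).2 fun _ => f.norm_coe_le_norm _

lemma continuous_coordTranslate (j : ι) (f : C(UnitAddTorus ι, ℂ)) :
    Continuous fun t => coordTranslate j t f :=
  ContinuousMap.continuous_of_continuous_uncurry _ <| f.continuous.comp <|
    continuous_snd.sub ((continuous_single j).comp continuous_fst)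

lemma coordTranslate_mFourier [Fintype ι] (j : ι) (t : UnitAddCircle) (n : ι → ℤ) :
    coordTranslate j t (mFourier n) = fourier (-n j) t • mFourier n := by
  have h_fourier (k : ℤ) (a b : UnitAddCircle) :
      fourier k (a - b) = fourier k a * fourier (-k) b := by
    rw [fourier_apply, smul_sub, sub_eq_add_neg, ← neg_smul, AddCircle.toCircle_add,
      Circle.coe_mul, fourier_apply, fourier_apply]
  have h_single : ∏ i, fourier (-n i) ((Pi.single j t : UnitAddTorus ι) i) = fourier (-n j) t := by
    rw [prod_eq_single j, Pi.single_eq_same] <;> simp +contextual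
  ext x
  simp only [mFourier, coordTranslate_apply, ContinuousMap.coe_mk, Pi.sub_apply, h_fourier,
    prod_mul_distrib, h_single, ContinuousMap.smul_apply, smul_eq_mul, mul_comm]

lemma integrable_smul_coordTranslate (j : ι) (K : C(UnitAddCircle, ℂ)) (f : C(UnitAddTorus ι, ℂ)) :
    Integrable (fun t => K t • coordTranslate j t f) AddCircle.haarAddCircle :=
  ((map_continuous K).smul (continuous_coordTranslate j f)).integrable_of_hasCompactSupport
    (.of_compactSpace _)

lemma integrable_norm (K : C(UnitAddCircle, ℂ)) :
    Integrable (fun t => ‖K t‖) AddCircle.haarAddCircle :=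
  (map_continuous K).norm.integrable_of_hasCompactSupport (.of_compactSpace _)

lemma norm_integral_smul_coordTranslate_le (j : ι) (K : C(UnitAddCircle, ℂ))
    (f : C(UnitAddTorus ι, ℂ)) :
    ‖∫ t, K t • coordTranslate j t f ∂AddCircle.haarAddCircle‖ ≤
      (∫ t, ‖K t‖ ∂AddCircle.haarAddCircle) * ‖f‖ := by
  rw [← integral_mul_const]
  refine norm_integral_le_of_norm_le ((integrable_norm K).mul_const _) (.of_forall fun t => ?_)
  rw [norm_smul]
  gcongr
  exact norm_coordTranslate_le j t f

/-- Convolution along the `j`-th coordinate with a kernel on `𝕋`. -/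
def coordConv (j : ι) (K : C(UnitAddCircle, ℂ)) :
    C(UnitAddTorus ι, ℂ) →L[ℂ] C(UnitAddTorus ι, ℂ) :=
  LinearMap.mkContinuous
    { toFun := fun f => ∫ t, K t • coordTranslate j t f ∂AddCircle.haarAddCircle
      map_add' := fun f g => by
        rw [← integral_add (integrable_smul_coordTranslate j K f)
          (integrable_smul_coordTranslate j K g)]
        exact integral_congr_ae
          (.of_forall fun t => smul_add (K t) (coordTranslate j t f) (coordTranslate j t g))
      map_smul' := fun c f => by
        rw [RingHom.id_apply, ← integral_smul]
        exact integral_congr_ae (.of_forall fun t => smul_comm (K t) c (coordTranslate j t f)) }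
    (∫ t, ‖K t‖ ∂AddCircle.haarAddCircle) (norm_integral_smul_coordTranslate_le j K)

lemma coordConv_apply (j : ι) (K : C(UnitAddCircle, ℂ)) (f : C(UnitAddTorus ι, ℂ)) :
    coordConv j K f = ∫ t, K t • coordTranslate j t f ∂AddCircle.haarAddCircle :=
  rfl

lemma norm_coordConv_le (j : ι) (K : C(UnitAddCircle, ℂ)) :
    ‖coordConv j K‖ ≤ ∫ t, ‖K t‖ ∂AddCircle.haarAddCircle :=
  LinearMap.mkContinuous_norm_le _ (by positivity) _

lemma isFourierMultiplier_coordConv [Fintype ι] (j : ι) (K : C(UnitAddCircle, ℂ)) :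
    IsFourierMultiplier (coordConv j K) fun k => fourierCoeff K (k j) := fun k => by
  simp_rw [coordConv_apply, coordTranslate_mFourier, smul_smul]
  rw [integral_smul_const, fourierCoeff]
  simp_rw [smul_eq_mul, mul_comm]

lemma norm_sub_coordConv_le {j : ι} {K : C(UnitAddCircle, ℂ)} {f : C(UnitAddTorus ι, ℂ)}
    {ω : UnitAddCircle → ℝ} (hK : fourierCoeff K 0 = 1) (hω : Continuous ω)
    (hf : ∀ t, ‖f - coordTranslate j t f‖ ≤ ω t) :
    ‖f - coordConv j K f‖ ≤ ∫ t, ‖K t‖ * ω t ∂AddCircle.haarAddCircle := by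
  have h_mean : ∫ t, K t • f ∂AddCircle.haarAddCircle = f := by
    rw [integral_smul_const, integral_eq_fourierCoeff_zero, hK, one_smul]
  have h_int : Integrable (fun t => K t • f) AddCircle.haarAddCircle :=
    ((map_continuous K).smul continuous_const).integrable_of_hasCompactSupport (.of_compactSpace _)
  calc ‖f - coordConv j K f‖
      = ‖∫ t, K t • (f - coordTranslate j t f) ∂AddCircle.haarAddCircle‖ := by
        simp_rw [smul_sub]
        rw [integral_sub h_int (integrable_smul_coordTranslate j K f), h_mean, coordConv_apply]
    _ ≤ ∫ t, ‖K t‖ * ω t ∂AddCircle.haarAddCircle := by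
        refine norm_integral_le_of_norm_le ?_ (.of_forall fun t => ?_)
        · exact ((map_continuous K).norm.mul hω).integrable_of_hasCompactSupport
            (.of_compactSpace _)
        · rw [norm_smul]
          gcongr
          exact hf t

end CoordinateConvolution

section OperatorProducts

variable {𝕜 E : Type*} [NontriviallyNormedField 𝕜] [SeminormedAddCommGroup E] [NormedSpace 𝕜 E]

lemma norm_sub_apply_le_of_mul_eq {D J : E →L[𝕜] E} (h : D * J = J) (f : E) :
    ‖f - D f‖ ≤ (1 + ‖D‖) * ‖f - J f‖ := by
  have h_eq : f - D f = (f - J f) - D (f - J f) := by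
    rw [map_sub, ← mul_apply_eq_comp, h]
    abel
  calc ‖f - D f‖ ≤ ‖f - J f‖ + ‖D (f - J f)‖ := h_eq ▸ norm_sub_le _ _
    _ ≤ ‖f - J f‖ + ‖D‖ * ‖f - J f‖ := by
        gcongr
        exact D.le_opNorm _
    _ = (1 + ‖D‖) * ‖f - J f‖ := by ring

lemma norm_sub_list_prod_apply_le {l : List (E →L[𝕜] E)} {B δ : ℝ} {f : E}
    (hB : ∀ T ∈ l, ‖T‖ ≤ B) (hδ : ∀ T ∈ l, ‖f - T f‖ ≤ δ) :
    ‖f - l.prod f‖ ≤ δ * ∑ i ∈ range l.length, B ^ i := by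
  induction l with
  | nil => simp
  | cons T l ih =>
    rw [List.forall_mem_cons] at hB hδ
    have h_step : ‖T (f - l.prod f)‖ ≤ B * (δ * ∑ i ∈ range l.length, B ^ i) :=
      T.le_of_opNorm_le_of_le hB.1 (ih hB.2 hδ.2)
    calc ‖f - (T :: l).prod f‖ = ‖(f - T f) + T (f - l.prod f)‖ := by
          rw [List.prod_cons, mul_apply_eq_comp, map_sub]
          congr 1
          abel
      _ ≤ δ + B * (δ * ∑ i ∈ range l.length, B ^ i) := norm_add_le_of_le hδ.1 h_step
      _ = δ * ∑ i ∈ range (T :: l).length, B ^ i := by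
          rw [List.length_cons, geom_sum_succ]
          ring

lemma mul_geom_sum_le_pow {A B : ℝ} (hA : 1 ≤ A) (hB : 1 ≤ B) (n : ℕ) :
    A * (1 + B) * ∑ i ∈ range n, B ^ i ≤ (3 * A * B) ^ n := by
  induction n with
  | zero => simp
  | succ n ih =>
    have hAB : 1 ≤ A * B := one_le_mul_of_one_le_of_one_le hA hB
    have h_one : 1 ≤ (3 * A * B) ^ n := one_le_pow₀ (by linarith)
    calc A * (1 + B) * ∑ i ∈ range (n + 1), B ^ i
        = A * (1 + B) * 1 + B * (A * (1 + B) * ∑ i ∈ range n, B ^ i) := by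
          rw [geom_sum_succ]
          ring
      _ ≤ A * (B + B) * (3 * A * B) ^ n + A * B * (3 * A * B) ^ n := by
          gcongr
          exact le_mul_of_one_le_left (by linarith) hA
      _ = (3 * A * B) ^ (n + 1) := by ring

end OperatorProducts

section TorusEstimate

variable {ι : Type*} [DecidableEq ι]

lemma coordConv_dirichlet_mul_jackson [Finite ι] (j : ι) {r m : ℕ} (h : 4 * r ≤ m) :
    coordConv j (dirichlet m) * coordConv j (jackson r) = coordConv j (jackson r) := by
  have := Fintype.ofFinite ι
  have h_mul := (isFourierMultiplier_coordConv j (dirichlet m)).mul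
    (isFourierMultiplier_coordConv j (jackson r))
  refine h_mul.unique (T := coordConv j (jackson r)) fun k => ?_
  rw [isFourierMultiplier_coordConv j (jackson r) k, Pi.mul_apply, fourierCoeff_dirichlet]
  split_ifs with hk
  · rw [one_mul]
  · rw [mem_Icc, ← abs_le, not_le] at hk
    have h_degree : 4 * (r : ℤ) < |k j| := lt_of_le_of_lt (by exact_mod_cast h) hk
    simp only [zero_mul, fourierCoeff_jackson_eq_zero h_degree]

variable {α : ℝ} {f : C(UnitAddTorus ι, ℂ)}

lemma norm_sub_coordConv_jackson_le (h0 : 0 ≤ α) (h2 : α ≤ 2) {j : ι}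
    (hf : ∀ t, ‖f - coordTranslate j t f‖ ≤ ‖t‖ ^ α) (r : ℕ) :
    ‖f - coordConv j (jackson r) f‖ ≤ 2 * (2 * r + 1 : ℝ) ^ (-α) :=
  (norm_sub_coordConv_le (fourierCoeff_jackson_zero r)
    (continuous_norm.rpow_const fun _ => .inr h0) hf).trans
    (integral_norm_jackson_mul_rpow_le h0 h2 r)

lemma norm_sub_coordConv_dirichlet_le [Finite ι] (h0 : 0 ≤ α) (h1 : α ≤ 1) {j : ι}
    (hf : ∀ t, ‖f - coordTranslate j t f‖ ≤ ‖t‖ ^ α) {m : ℕ} (hm : 2 ≤ m) :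
    ‖f - coordConv j (dirichlet m) f‖ ≤ 6 * (1 + 6 * log m) * (m : ℝ) ^ (-α) := by
  have h_degree : (m / 3 : ℝ) ≤ 2 * (m / 4 : ℕ) + 1 := by
    have : m ≤ 3 * (2 * (m / 4) + 1) := by omega
    have : (m : ℝ) ≤ 3 * (2 * (m / 4 : ℕ) + 1) := by exact_mod_cast this
    linarith
  have hm0 : (0 : ℝ) < m := by positivity
  have h_three : (3 : ℝ) ^ α ≤ 3 := by
    simpa using rpow_le_rpow_of_exponent_le (by norm_num : (1 : ℝ) ≤ 3) h1
  calc ‖f - coordConv j (dirichlet m) f‖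
      ≤ (1 + ‖coordConv j (dirichlet m)‖) * ‖f - coordConv j (jackson (m / 4)) f‖ :=
        norm_sub_apply_le_of_mul_eq (coordConv_dirichlet_mul_jackson j (by omega)) f
    _ ≤ (1 + 6 * log m) * (2 * (2 * (m / 4 : ℕ) + 1 : ℝ) ^ (-α)) := by
        gcongr
        · exact (norm_coordConv_le j _).trans (integral_norm_dirichlet_le hm)
        · exact norm_sub_coordConv_jackson_le h0 (by linarith) hf _
    _ ≤ (1 + 6 * log m) * (2 * (m / 3 : ℝ) ^ (-α)) := by
        gcongr ?_ * (?_ * ?_)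
        exact rpow_le_rpow_of_nonpos (by positivity) h_degree (by linarith)
    _ = (1 + 6 * log m) * (2 * 3 ^ α * (m : ℝ) ^ (-α)) := by
        rw [div_rpow hm0.le (by norm_num), rpow_neg (by norm_num : (0 : ℝ) ≤ 3), div_inv_eq_mul]
        ring
    _ ≤ (1 + 6 * log m) * (2 * 3 * (m : ℝ) ^ (-α)) := by gcongr
    _ = 6 * (1 + 6 * log m) * (m : ℝ) ^ (-α) := by ring

lemma prod_coordConv_dirichlet [Fintype ι] (m : ℕ) :
    ((univ : Finset ι).toList.map fun j => coordConv j (dirichlet m)).prod =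
      fourierPartialSum (Fintype.piFinset fun _ => Icc (-(m : ℤ)) m) := by
  refine (IsFourierMultiplier.list_prod
    (fun j => isFourierMultiplier_coordConv j (dirichlet m)) _).unique fun k => ?_
  rw [isFourierMultiplier_fourierPartialSum, prod_map_toList, Finset.prod_apply]
  simp [fourierCoeff_dirichlet, Fintype.mem_piFinset, prod_ite_zero]

lemma norm_sub_fourierPartialSum_le [Fintype ι] (h0 : 0 ≤ α) (h1 : α ≤ 1)
    (hf : ∀ j t, ‖f - coordTranslate j t f‖ ≤ ‖t‖ ^ α) {m : ℕ} (hm : 2 ≤ m) :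
    ‖f - fourierPartialSum (Fintype.piFinset fun _ => Icc (-(m : ℤ)) m) f‖ ≤
      (108 * log m) ^ Fintype.card ι * (m : ℝ) ^ (-α) := by
  have h_log : 1 ≤ 6 * log m := by
    have : log 2 ≤ log m := log_le_log two_pos (by exact_mod_cast hm)
    linarith [log_two_gt_d9]
  have h_norm : ∀ T ∈ (univ : Finset ι).toList.map fun j => coordConv j (dirichlet m),
      ‖T‖ ≤ 6 * log m := by
    rw [List.forall_mem_map]
    exact fun j _ => (norm_coordConv_le j _).trans (integral_norm_dirichlet_le hm)
  have h_error : ∀ T ∈ (univ : Finset ι).toList.map fun j => coordConv j (dirichlet m),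
      ‖f - T f‖ ≤ 6 * (1 + 6 * log m) * (m : ℝ) ^ (-α) := by
    rw [List.forall_mem_map]
    exact fun j _ => norm_sub_coordConv_dirichlet_le h0 h1 (hf j) hm
  have h_prod := norm_sub_list_prod_apply_le h_norm h_error
  rw [prod_coordConv_dirichlet, List.length_map, length_toList, card_univ, mul_right_comm] at h_prod
  calc _ ≤ _ := h_prod
    _ ≤ (3 * 6 * (6 * log m)) ^ Fintype.card ι * (m : ℝ) ^ (-α) := by
        gcongr
        exact mul_geom_sum_le_pow (by norm_num) h_log _
    _ = (108 * log m) ^ Fintype.card ι * (m : ℝ) ^ (-α) := by ring_nf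

end TorusEstimate

section PeriodicFunctions

open UnitAddTorus

variable {d : ℕ} {f : (Fin d → ℝ) → ℂ}

/-- Continuous functions on `ℝ^d`, 1-periodic in each coordinate, that are `α`-Hölder with
constant `1` along each coordinate direction. -/
def PeriodicCoordHolder (α : ℝ) (d : ℕ) : Set ((Fin d → ℝ) → ℂ) :=
  {f | Continuous f ∧ Periodic1 d f ∧
    ∀ (x : Fin d → ℝ) (i : Fin d) (t : ℝ), ‖f x - f (x - Pi.single i t)‖ ≤ |t| ^ α}

lemma FdAlpha_subset_periodicCoordHolder (α : ℝ) (d : ℕ) :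
    FdAlpha α d ⊆ PeriodicCoordHolder α d := by
  rintro f ⟨h_cont, h_per, -, -, h_holder⟩
  refine ⟨h_cont, h_per, fun x i t => (h_holder _ _).trans_eq ?_⟩
  simp only [Pi.sub_apply, sub_sub_cancel]
  rw [sum_eq_single i (by simp +contextual) (by simp), Pi.single_eq_same, sqrt_sq_eq_abs]

/-- The projection `ℝ^d → 𝕋^d`, through which 1-periodic functions factor. -/
def toTorus (d : ℕ) : C(Fin d → ℝ, UnitAddTorus (Fin d)) :=
  ⟨Pi.map fun _ x => (x : UnitAddCircle),
    (IsOpenQuotientMap.piMap fun _ => QuotientAddGroup.isOpenQuotientMap_mk).continuous⟩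

lemma isOpenQuotientMap_toTorus (d : ℕ) : IsOpenQuotientMap (toTorus d) :=
  IsOpenQuotientMap.piMap fun _ => QuotientAddGroup.isOpenQuotientMap_mk

lemma Periodic1.periodic_single (hf : Periodic1 d f) (i : Fin d) :
    Function.Periodic f (Pi.single i 1) := fun x => by
  rw [← hf x i]
  congr 1
  ext j
  rcases eq_or_ne j i with rfl | hj <;> simp [*]

lemma Periodic1.periodic_intCast (hf : Periodic1 d f) (n : Fin d → ℤ) :
    Function.Periodic f fun i => (n i : ℝ) := by
  have h_sum : (fun i => (n i : ℝ)) = ∑ i, n i • Pi.single i (1 : ℝ) := by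
    ext j
    simp [Finset.sum_apply, Pi.single_apply]
  rw [h_sum]
  refine sum_induction _ (Function.Periodic f) (fun _ _ => Function.Periodic.add_period) ?_
    fun i _ => (hf.periodic_single i).zsmul (n i)
  exact fun x => by rw [add_zero]

lemma Periodic1.factorsThrough_toTorus (hf : Periodic1 d f) :
    Function.FactorsThrough f (toTorus d) := by
  intro x y hxy
  have h_coord (i : Fin d) : ∃ n : ℤ, (n : ℝ) = x i - y i := by
    have : ((x i - y i : ℝ) : UnitAddCircle) = 0 := by
      rw [AddCircle.coe_sub, sub_eq_zero]
      exact congr_fun hxy i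
    simpa using AddCircle.coe_eq_zero_iff (1 : ℝ) |>.1 this
  choose n hn using h_coord
  have h_eq : x = y + fun i => (n i : ℝ) := by
    ext i
    simp [hn]
  rw [h_eq, hf.periodic_intCast n y]

lemma exists_torus_lift (h_cont : Continuous f) (hf : Periodic1 d f) :
    ∃ F : C(UnitAddTorus (Fin d), ℂ), ∀ x, F (toTorus d x) = f x :=
  ⟨(isOpenQuotientMap_toTorus d).isQuotientMap.lift ⟨f, h_cont⟩ hf.factorsThrough_toTorus,
    fun x => DFunLike.congr_fun
      ((isOpenQuotientMap_toTorus d).isQuotientMap.lift_comp ⟨f, h_cont⟩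
        hf.factorsThrough_toTorus) x⟩

lemma mFourier_toTorus (k : Fin d → ℤ) (x : Fin d → ℝ) : mFourier k (toTorus d x) = eK d k x := by
  have h_factor (i : Fin d) : fourier (k i) (x i : UnitAddCircle) =
      Complex.exp (2 * π * Complex.I * (k i * x i)) := by
    rw [fourier_coe_apply]
    push_cast
    ring_nf
  rw [eK, mul_sum, Complex.exp_sum]
  simp_rw [← h_factor]
  rfl

lemma mFourierCoeff_eq_fCoeff {F : UnitAddTorus (Fin d) → ℂ} (hF : ∀ x, F (toTorus d x) = f x)
    (k : Fin d → ℤ) : mFourierCoeff F k = fCoeff d f k := by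
  have h_cube : {x : Fin d → ℝ | ∀ i, x i ∈ Set.Ioc (0 : ℝ) (0 + 1)} =ᵐ[volume] cube d := by
    have h_Ioc : {x : Fin d → ℝ | ∀ i, x i ∈ Set.Ioc (0 : ℝ) (0 + 1)} =
        Set.univ.pi fun _ => Set.Ioc 0 1 := by
      ext
      simp
    rw [h_Ioc, cube, Set.pi_univ_Icc]
    exact Measure.univ_pi_Ioc_ae_eq_Icc (μ := fun _ => volume)
  have h_char (x : Fin d → ℝ) : mFourier (-k) (fun i => (x i : UnitAddCircle)) =
      Complex.exp (-(2 * π * Complex.I) * ∑ i, (k i : ℂ) * (x i : ℂ)) := by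
    refine (mFourier_toTorus (-k) x).trans ?_
    simp [eK]
  rw [mFourierCoeff_eq_integral F k 0, fCoeff]
  refine (setIntegral_congr_set h_cube).trans ?_
  congr 1
  funext x
  rw [h_char, smul_eq_mul, mul_comm]
  exact congr_arg (· * _) (hF x)

lemma norm_sub_coordTranslate_le {F : C(UnitAddTorus (Fin d), ℂ)} {α : ℝ}
    (hF : ∀ x, F (toTorus d x) = f x)
    (hf : ∀ (x : Fin d → ℝ) (i : Fin d) (t : ℝ), ‖f x - f (x - Pi.single i t)‖ ≤ |t| ^ α)
    (i : Fin d) (t : UnitAddCircle) : ‖F - coordTranslate i t F‖ ≤ ‖t‖ ^ α := by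
  obtain ⟨s, hs, rfl⟩ := exists_abs_le_half_coe_eq t
  refine (ContinuousMap.norm_le _ (by positivity)).2 fun y => ?_
  obtain ⟨x, rfl⟩ := (isOpenQuotientMap_toTorus d).surjective y
  have h_shift : toTorus d x - Pi.single i (s : UnitAddCircle) = toTorus d (x - Pi.single i s) := by
    ext j
    rcases eq_or_ne j i with rfl | hj <;> simp [toTorus, *]
  rw [ContinuousMap.sub_apply, coordTranslate_apply, h_shift, hF, hF,
    norm_coe_unitAddCircle_of_abs_le hs]
  exact hf x i s

lemma norm_sub_partialSum_boxZ_le {α : ℝ} (h0 : 0 ≤ α) (h1 : α ≤ 1) {m : ℕ} (hm : 2 ≤ m)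
    (hf : f ∈ PeriodicCoordHolder α d) (x : Fin d → ℝ) :
    ‖f x - ∑ k ∈ boxZ d m, fCoeff d f k * eK d k x‖ ≤ (108 * log m) ^ d * (m : ℝ) ^ (-α) := by
  obtain ⟨F, hF⟩ := exists_torus_lift hf.1 hf.2.1
  have h_torus := norm_sub_fourierPartialSum_le h0 h1 (norm_sub_coordTranslate_le hF hf.2.2) hm
  rw [Fintype.card_fin] at h_torus
  refine (le_of_eq ?_).trans ((ContinuousMap.norm_coe_le_norm _ (toTorus d x)).trans h_torus)
  rw [ContinuousMap.sub_apply, fourierPartialSum_apply, hF]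
  simp_rw [mFourierCoeff_eq_fCoeff hF, mFourier_toTorus]
  rfl

end PeriodicFunctions

section FrequencyCount

lemma card_boxZ (d m : ℕ) : #(boxZ d m) = (2 * m + 1) ^ d := by
  rw [boxZ, Fintype.card_piFinset, prod_const, card_Icc_neg_natCast, card_univ, Fintype.card_fin]

lemma exists_nat_le_log_and_log_le {Y : ℝ} (hY : 0 < Y) :
    ∃ m : ℕ, 2 ≤ m ∧ Y ≤ log m ∧ log (2 * m + 1) ≤ Y + 2 := by
  have h_ge : exp Y ≤ ⌈exp Y⌉₊ := Nat.le_ceil _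
  have h_lt : (⌈exp Y⌉₊ : ℝ) < exp Y + 1 := Nat.ceil_lt_add_one (exp_pos _).le
  have h_one : 1 < exp Y := one_lt_exp_iff.2 hY
  have h_five : 5 ≤ exp 2 := by
    have : exp 2 = exp 1 * exp 1 := by rw [← exp_add, one_add_one_eq_two]
    nlinarith [exp_one_gt_d9]
  refine ⟨⌈exp Y⌉₊, by exact_mod_cast h_one.trans_le h_ge,
    (le_log_iff_exp_le (by linarith)).2 h_ge, (log_le_iff_le_exp (by positivity)).2 ?_⟩
  rw [exp_add]
  nlinarith

lemma mul_log_pow_mul_rpow_neg_le {c α x : ℝ} {d : ℕ} (hc : 0 ≤ c) (hα : 0 < α) (hd : d ≠ 0)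
    (hx : 1 ≤ x) :
    (c * log x) ^ d * x ^ (-α) ≤ (2 * c / α * d) ^ d * x ^ (-(α / 2)) := by
  have hx0 : 0 < x := by linarith
  have h_log := log_nonneg hx
  have h_factor : c * log x ≤ 2 * c / α * d * x ^ (α / (2 * d)) :=
    calc c * log x ≤ c * (x ^ (α / (2 * d)) / (α / (2 * d))) := by
          gcongr
          exact log_le_rpow_div hx0.le (by positivity)
      _ = 2 * c / α * d * x ^ (α / (2 * d)) := by field_simp
  calc (c * log x) ^ d * x ^ (-α)
      ≤ (2 * c / α * d * x ^ (α / (2 * d))) ^ d * x ^ (-α) := by gcongr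
    _ = (2 * c / α * d) ^ d * (x ^ (α / (2 * d) * d) * x ^ (-α)) := by
        rw [mul_pow, rpow_mul_natCast hx0.le, mul_assoc]
    _ = (2 * c / α * d) ^ d * x ^ (-(α / 2)) := by
        rw [← rpow_add hx0]
        congr 2
        field_simp
        ring

lemma mul_log_pow_mul_rpow_neg_le_of_le_log {c α x ε : ℝ} {d : ℕ} (hc : 0 < c) (hα : 0 < α)
    (hd : d ≠ 0) (hx : 1 ≤ x) (hε : 0 < ε)
    (h : 2 / α * (d * log (2 * c / α * d) + log ε⁻¹) ≤ log x) :
    (c * log x) ^ d * x ^ (-α) ≤ ε := by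
  refine (mul_log_pow_mul_rpow_neg_le hc.le hα hd hx).trans ?_
  have hx0 : 0 < x := by linarith
  rw [← log_le_log_iff (by positivity) hε, log_mul (by positivity) (by positivity), log_pow,
    log_rpow hx0]
  rw [div_mul_eq_mul_div, div_le_iff₀ hα, log_inv] at h
  linarith

lemma mul_add_add_two_le {b w L l d : ℝ} (hb : 0 ≤ b) (hw : 0 ≤ w) (hL : 1 / 2 ≤ L)
    (hl : 1 / 2 ≤ l) (hd : 1 ≤ d) :
    b * (d * (w + L) + l) + 2 ≤ 8 * (b * (w + 2) + 2) * d * L ^ 2 * l := by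
  have h_Ll : 1 / 4 ≤ L * l := by nlinarith
  have h_LL : 1 / 4 ≤ L ^ 2 := by nlinarith
  have h_one : 1 ≤ 8 * (L ^ 2 * l) := by nlinarith
  have h_L : L ≤ 8 * (L ^ 2 * l) := by nlinarith
  have h_l : l ≤ 8 * (L ^ 2 * l) := by nlinarith
  set X := 8 * (L ^ 2 * l)
  have h_dX : X ≤ d * X := le_mul_of_one_le_left (by linarith) hd
  calc b * (d * (w + L) + l) + 2 ≤ b * (d * (w * X + X) + d * X) + 2 * (d * X) := by
        gcongr
        · exact le_mul_of_one_le_right hw h_one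
        · exact h_l.trans h_dX
        · linarith
    _ = 8 * (b * (w + 2) + 2) * d * L ^ 2 * l := by ring

lemma exists_log_card_boxZ_le_and_mul_log_pow_le {c α : ℝ} (hc : 0 < c) (hα : 0 < α) :
    ∃ c' : ℝ, 0 < c' ∧ ∀ (d : ℕ) (ε : ℝ), 2 ≤ d → ε ∈ Set.Ioo (0 : ℝ) (1 / 2) →
      ∃ m : ℕ, 2 ≤ m ∧ log #(boxZ d m) ≤ c' * d ^ 2 * log d ^ 2 * log ε⁻¹ ∧
        (c * log m) ^ d * (m : ℝ) ^ (-α) ≤ ε := by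
  set w := |log (2 * c / α)|
  refine ⟨8 * (2 / α * (w + 2) + 2), by positivity, fun d ε hd hε => ?_⟩
  have hd2 : (2 : ℝ) ≤ d := by exact_mod_cast hd
  have h_half_le_log {x : ℝ} (hx : 2 ≤ x) : 1 / 2 ≤ log x := by
    linarith [log_two_gt_d9, log_le_log two_pos hx]
  have h_log_d := h_half_le_log hd2
  have h_log_ε := h_half_le_log ((le_inv_comm₀ two_pos hε.1).2 (by linarith [hε.2]))
  obtain ⟨m, hm, h_ge, h_le⟩ := exists_nat_le_log_and_log_le
    (Y := 2 / α * (d * (w + log d) + log ε⁻¹)) (by positivity)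
  refine ⟨m, hm, ?_, mul_log_pow_mul_rpow_neg_le_of_le_log hc hα (by omega)
    (by exact_mod_cast one_le_two.trans hm) hε.1 (le_trans ?_ h_ge)⟩
  · calc log #(boxZ d m) = d * log (2 * m + 1) := by
          rw [card_boxZ]
          push_cast
          exact log_pow _ _
      _ ≤ d * (8 * (2 / α * (w + 2) + 2) * d * log d ^ 2 * log ε⁻¹) := by
          gcongr
          exact h_le.trans (mul_add_add_two_le (by positivity) (abs_nonneg _) h_log_d h_log_ε
            (by linarith))
      _ = 8 * (2 / α * (w + 2) + 2) * d ^ 2 * log d ^ 2 * log ε⁻¹ := by ring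
  · rw [log_mul (by positivity) (by positivity)]
    gcongr
    exact le_abs_self _

end FrequencyCount

theorem statement9_general :
    ∃ c : ℝ, 0 < c ∧ ∀ α ∈ Set.Ioc (0 : ℝ) 1,
      (∀ d m : ℕ, 2 ≤ m → ∀ f ∈ PeriodicCoordHolder α d, ∀ x : Fin d → ℝ,
        ‖f x - ∑ k ∈ boxZ d m, fCoeff d f k * eK d k x‖
          ≤ (c * log m) ^ d * (m : ℝ) ^ (-α)) ∧
      ∃ c' : ℝ, 0 < c' ∧ ∀ (d : ℕ) (ε : ℝ), 2 ≤ d → ε ∈ Set.Ioo (0 : ℝ) (1 / 2) →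
        ∃ Λ : Finset (Fin d → ℤ),
          log #Λ ≤ c' * d ^ 2 * log d ^ 2 * log ε⁻¹ ∧
          ∀ f ∈ PeriodicCoordHolder α d, ∀ x : Fin d → ℝ,
            ‖f x - ∑ k ∈ Λ, fCoeff d f k * eK d k x‖ ≤ ε := by
  refine ⟨108, by norm_num, fun α ⟨h0, h1⟩ => ?_⟩
  obtain ⟨c', hc', h_box⟩ :=
    exists_log_card_boxZ_le_and_mul_log_pow_le (c := 108) (by norm_num) h0
  refine ⟨fun d m hm f hf x => norm_sub_partialSum_boxZ_le h0.le h1 hm hf x, c', hc',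
    fun d ε hd hε => ?_⟩
  obtain ⟨m, hm, h_card, h_error⟩ := h_box d ε hd hε
  exact ⟨boxZ d m, h_card, fun f hf x =>
    (norm_sub_partialSum_boxZ_le h0.le h1 hm hf x).trans h_error⟩

/-- for `α ∈ (0,1]` there is `c > 0` (depending only on `α`) such that for
all `d ≥ 1`, `m ≥ 2` and `f ∈ F_d^α`, `‖f − P_{[-m,m]^d} f‖_∞ ≤ (c log m)^d m^{-α}`;
consequently there is `c' > 0` (depending only on `α`) with
`log N^∞(ε, F_d^α) ≤ c' d² log²(d) log(ε⁻¹)` for all `d ≥ 2`, `ε ∈ (0,1/2)`. -/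
theorem statement9 :
    ∀ α : ℝ, α ∈ Set.Ioc (0 : ℝ) 1 →
      (∃ c : ℝ, 0 < c ∧
        ∀ (d m : ℕ), 1 ≤ d → 2 ≤ m → ∀ f ∈ FdAlpha α d, ∀ x : Fin d → ℝ,
          ‖f x - ∑ k ∈ boxZ d m, fCoeff d f k * eK d k x‖
            ≤ (c * Real.log m) ^ d * (m : ℝ) ^ (-α)) ∧
      (∃ c' : ℝ, 0 < c' ∧
        ∀ (d : ℕ) (ε : ℝ), 2 ≤ d → ε ∈ Set.Ioo (0 : ℝ) (1/2) →
          ∃ Λ : Finset (Fin d → ℤ),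
            Real.log Λ.card ≤ c' * d ^ 2 * Real.log d ^ 2 * Real.log ε⁻¹ ∧
            ∀ f ∈ FdAlpha α d, ∀ x : Fin d → ℝ,
              ‖f x - ∑ k ∈ Λ, fCoeff d f k * eK d k x‖ ≤ ε) := by
  intro α hα
  obtain ⟨c, hc, h⟩ := statement9_general
  obtain ⟨h_box, c', hc', h_count⟩ := h α hα
  exact ⟨⟨c, hc, fun d m _ hm f hf => h_box d m hm f (FdAlpha_subset_periodicCoordHolder α d hf)⟩,
    c', hc', fun d ε hd hε => (h_count d ε hd hε).imp fun _ hΛ =>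
      ⟨hΛ.1, fun f hf => hΛ.2 f (FdAlpha_subset_periodicCoordHolder α d hf)⟩⟩
end
end

section
/- The problem of recovery in the uniform norm on the classes F_d^log suffers from the curse of dimensionality, even for algorithms using arbitrary adaptive linear information: for every d ∈ ℕ, every n ≤ 5^d/2, and every map A_n : F_d^log → L_∞([0,1]^d) of the form A_n(f) = φ(L₁(f), …, Lₙ(f)), where each L_i is a linear functional that may be chosen adaptively depending on the previously computed values L₁(f), …, L_{i−1}(f), and φ : ℂⁿ → L_∞([0,1]^d) is arbitrary, one has sup_{f ∈ F_d^log} ‖f − A_n(f)‖_∞ ≥ 1/√2. In particular, this lower bound holds for every sampling algorithm A_n(f) = φ(f(x₁),…,f(xₙ)) with n ≤ 5^d/2 points x₁,…,xₙ ∈ [0,1]^d. -/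
open MeasureTheory Real Finset

noncomputable section

/-- The information vector produced by adaptive linear information: `L i` is the linear
functional used in step `i`, chosen depending on the previously computed values. -/
def infoVec {V : Type*} [AddCommGroup V] [Module ℂ V] {n : ℕ}
    (L : (i : Fin n) → (Fin i.1 → ℂ) → (V →ₗ[ℂ] ℂ)) (f : V) : (i : Fin n) → ℂ
  | i => L i (fun j => infoVec L f ⟨j.1, j.2.trans i.2⟩) f
termination_by i => i.1
decreasing_by exact j.2

/-!
Let `W` be an `m`-dimensional space of trigonometric polynomials with `N` fixed frequencies, and let
`w₁, …, wₘ` be an `L²`-orthonormal basis of it. The function `x ↦ ∑ₗ |wₗ(x)|²` has mean `m`, hence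
some value at least `m`, and Riesz representation of the evaluation at such a point `x` gives
`p ∈ W` with `‖p‖₂ ≤ 1` and `|p(x)| ≥ √m`. By the Cauchy–Schwarz inequality the coefficients of `p`
have absolute sum at most `√N`, so `f = p / √N` satisfies `∑ₖ |f̂(k)| ≤ 1` and `‖f‖_∞ ≥ √(m / N)`.

For `N` take the `5^d` frequencies with `‖k‖_∞ ≤ 2`, which all have weight one because `log 2 ≤ 1`,
and for `W` the joint kernel of the `n` functionals that the algorithm uses as long as it only
receives zeros. Then `m ≥ N - n`, and the algorithm cannot distinguish `f` from `-f`, so on one of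
the two its error is at least `‖f‖_∞ ≥ √(1 - n / N)`.
-/

section SupNorm

variable {X E : Type*} [MeasurableSpace X] {μ : Measure X} [NormedAddCommGroup E]

lemma enorm_le_eLpNorm_top_restrict [TopologicalSpace X] [μ.IsOpenPosMeasure] {s : Set X}
    {f : X → E} (hf : ContinuousOn f s) (hs : s ⊆ closure (interior s)) {x : X} (hx : x ∈ s) :
    ‖f x‖ₑ ≤ eLpNorm f ⊤ (μ.restrict s) := by
  rw [eLpNorm_exponent_top]
  have h_ae : (fun y => min ‖f y‖ₑ (eLpNormEssSup f (μ.restrict s))) =ᵐ[μ.restrict s]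
      fun y => ‖f y‖ₑ := by
    filter_upwards [enorm_ae_le_eLpNormEssSup f (μ.restrict s)] with y hy using min_eq_left hy
  have h_cont : ContinuousOn (fun y => min ‖f y‖ₑ (eLpNormEssSup f (μ.restrict s))) s :=
    (continuous_id.min continuous_const).comp_continuousOn hf.enorm
  exact min_eq_left_iff.mp (Measure.eqOn_of_ae_eq h_ae h_cont hf.enorm hs hx)

lemma eLpNorm_top_le_max_sub [NormedSpace ℝ E] (f g : X → E) :
    eLpNorm f ⊤ μ ≤ max (eLpNorm (f - g) ⊤ μ) (eLpNorm (-f - g) ⊤ μ) := by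
  set a := eLpNorm (f - g) ⊤ μ
  set b := eLpNorm (-f - g) ⊤ μ
  have h_two : 2 * eLpNorm f ⊤ μ ≤ 2 * max a b := calc
    2 * eLpNorm f ⊤ μ = eLpNorm ((2 : ℝ) • f) ⊤ μ := by
      rw [eLpNorm_const_smul]
      simp [enorm_eq_nnnorm]
    _ = eLpNorm ((f - g) + -(-f - g)) ⊤ μ := by
      congr 1
      module
    _ ≤ a + b := by
      simp only [a, b, ← eLpNorm_neg (-f - g), eLpNorm_exponent_top]
      exact eLpNormEssSup_add_le
    _ ≤ 2 * max a b := by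
      rw [two_mul]
      exact add_le_add (le_max_left a b) (le_max_right a b)
  exact (ENNReal.mul_le_mul_iff_right two_ne_zero ENNReal.ofNat_ne_top).mp h_two

end SupNorm

section AdaptiveInformation

variable {V : Type*} [AddCommGroup V] [Module ℂ V] {n : ℕ}

lemma infoVec_const (ℓ : Fin n → V →ₗ[ℂ] ℂ) (f : V) :
    infoVec (fun i _ => ℓ i) f = fun i => ℓ i f := by
  funext i
  rw [infoVec]

lemma infoVec_eq_zero {L : (i : Fin n) → (Fin i.1 → ℂ) → (V →ₗ[ℂ] ℂ)} {f : V}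
    (hf : ∀ i, L i 0 f = 0) : infoVec L f = 0 := by
  suffices h : ∀ q (hq : q < n), infoVec L f ⟨q, hq⟩ = 0 from funext fun i => h i i.2
  intro q
  induction q using Nat.strong_induction_on with
  | _ q ih =>
    intro hq
    have h_prev : (fun j : Fin q => infoVec L f ⟨j, j.2.trans hq⟩) = 0 :=
      funext fun j => ih j j.2 _
    rw [infoVec, h_prev, hf]

lemma exists_eLpNorm_top_le_sub_infoVec {X E : Type*} [MeasurableSpace X] {μ : Measure X}
    [NormedAddCommGroup E] [NormedSpace ℂ E] {F : Set (X → E)} {f : X → E} (hf : f ∈ F)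
    (hf_neg : -f ∈ F) {L : (i : Fin n) → (Fin i.1 → ℂ) → ((X → E) →ₗ[ℂ] ℂ)}
    (hL : ∀ i, L i 0 f = 0) (φ : (Fin n → ℂ) → X → E) :
    ∃ g ∈ F, eLpNorm f ⊤ μ ≤ eLpNorm (fun t => g t - φ (infoVec L g) t) ⊤ μ := by
  have h_info : infoVec L f = 0 := infoVec_eq_zero hL
  have h_info_neg : infoVec L (-f) = 0 :=
    infoVec_eq_zero fun i => by rw [map_neg, hL, neg_zero]
  rcases le_max_iff.mp (eLpNorm_top_le_max_sub (μ := μ) f (φ 0)) with h | h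
  · exact ⟨f, hf, by rwa [h_info]⟩
  · exact ⟨-f, hf_neg, by rwa [h_info_neg]⟩

end AdaptiveInformation

section HilbertSpace

variable {𝕜 E X : Type*} [RCLike 𝕜] [NormedAddCommGroup E] [InnerProductSpace 𝕜 E]

lemma sum_norm_le_sqrt_card_mul_norm {ι : Type*} [Fintype ι] (v : EuclideanSpace 𝕜 ι) :
    ∑ i, ‖v i‖ ≤ √(Fintype.card ι) * ‖v‖ := by
  rw [EuclideanSpace.norm_eq, ← sqrt_mul (Nat.cast_nonneg _)]
  exact le_sqrt_of_sq_le sq_sum_le_card_mul_sum_sq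

lemma exists_norm_le_one_norm_apply_eq_sqrt_sum {ι : Type*} [Fintype ι] {w : ι → E}
    (hw : Orthonormal 𝕜 w) (ℓ : E →ₗ[𝕜] 𝕜) :
    ∃ v, ‖v‖ ≤ 1 ∧ ‖ℓ v‖ = √(∑ i, ‖ℓ (w i)‖ ^ 2) := by
  set S := ∑ i, ‖ℓ (w i)‖ ^ 2
  have hS : 0 ≤ S := sum_nonneg fun i _ => sq_nonneg _
  set v := ∑ i, starRingEnd 𝕜 (ℓ (w i)) • w i
  have hℓv : ℓ v = (S : 𝕜) := by
    simp [v, S, RCLike.conj_mul]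
  have hv : ‖v‖ = √S := by
    rw [eq_comm, sqrt_eq_iff_eq_sq hS (norm_nonneg v), ← RCLike.ofReal_inj (K := 𝕜),
      RCLike.ofReal_pow, ← inner_self_eq_norm_sq_to_K, hw.inner_sum]
    simp [S, RCLike.mul_conj]
  refine ⟨((√S)⁻¹ : 𝕜) • v, ?_, ?_⟩
  · rw [norm_smul, norm_inv, RCLike.norm_ofReal, abs_of_nonneg (sqrt_nonneg S), hv]
    exact inv_mul_le_one
  · rw [map_smul, norm_smul, norm_inv, hℓv, RCLike.norm_ofReal, RCLike.norm_ofReal,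
      abs_of_nonneg (sqrt_nonneg S), abs_of_nonneg hS, inv_mul_eq_div, div_sqrt]

lemma exists_mem_sqrt_finrank_le_norm_apply [MeasurableSpace X] {μ : Measure X} {s : Set X}
    (hs : μ s = 1) (A : E →ₗ[𝕜] X → 𝕜) (W : Submodule 𝕜 E) [FiniteDimensional 𝕜 W]
    (hA : ∀ v ∈ W, ∫ x in s, ‖A v x‖ ^ 2 ∂μ = ‖v‖ ^ 2) :
    ∃ v ∈ W, ‖v‖ ≤ 1 ∧ ∃ x ∈ s, √(Module.finrank 𝕜 W) ≤ ‖A v x‖ := by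
  let w := stdOrthonormalBasis 𝕜 W
  have h_one : ∀ i, ∫ x in s, ‖A (w i) x‖ ^ 2 ∂μ = 1 := fun i => by
    rw [hA _ (w i).2, Submodule.norm_coe, w.norm_eq_one, one_pow]
  have h_int : ∀ i, IntegrableOn (fun x => ‖A (w i) x‖ ^ 2) s μ := fun i =>
    .of_integral_ne_zero (by rw [h_one]; exact one_ne_zero)
  obtain ⟨x, hx, h_mean⟩ := exists_setAverage_le (by simp [hs]) (by simp [hs])
    (integrable_finsetSum univ fun i _ => h_int i)
  have h_finrank : (Module.finrank 𝕜 W : ℝ) ≤ ∑ i, ‖A (w i) x‖ ^ 2 := by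
    rw [setAverage_eq, measureReal_def, hs, integral_finsetSum _ fun i _ => h_int i] at h_mean
    simpa [h_one] using h_mean
  obtain ⟨v, hv, hAv⟩ := exists_norm_le_one_norm_apply_eq_sqrt_sum w.orthonormal
    (LinearMap.proj x ∘ₗ A ∘ₗ W.subtype)
  exact ⟨v, v.2, hv, x, hx, (sqrt_le_sqrt h_finrank).trans_eq hAv.symm⟩

end HilbertSpace

section Cube

lemma isCompact_cube (d : ℕ) : IsCompact (cube d) :=
  isCompact_univ_pi fun _ => isCompact_Icc

lemma integrableOn_cube {d : ℕ} {f : (Fin d → ℝ) → ℂ} (hf : Continuous f) :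
    IntegrableOn f (cube d) :=
  hf.continuousOn.integrableOn_compact (isCompact_cube d)

lemma volume_cube (d : ℕ) : volume (cube d) = 1 := by
  rw [cube, volume_pi_pi]
  simp

lemma cube_subset_closure_interior (d : ℕ) : cube d ⊆ closure (interior (cube d)) := by
  rw [cube, interior_pi_set Set.finite_univ, closure_pi_set]
  simp

end Cube

section Characters

variable {d : ℕ}

lemma eK_eq_mFourier (k : Fin d → ℤ) (x : Fin d → ℝ) :
    eK d k x = UnitAddTorus.mFourier k fun i => (x i : UnitAddCircle) := by
  simp [eK, UnitAddTorus.mFourier, Complex.exp_sum, Finset.mul_sum, mul_assoc]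

@[fun_prop]
lemma continuous_eK (k : Fin d → ℤ) : Continuous (eK d k) := by
  unfold eK
  fun_prop

lemma periodic1_eK (k : Fin d → ℤ) : Periodic1 d (eK d k) := by
  intro x i
  rw [eK_eq_mFourier, eK_eq_mFourier]
  congr 1
  funext j
  obtain rfl | hj := eq_or_ne j i <;> simp [*]

lemma conj_eK (k : Fin d → ℤ) (x : Fin d → ℝ) : starRingEnd ℂ (eK d k x) = eK d (-k) x := by
  rw [eK_eq_mFourier, eK_eq_mFourier, UnitAddTorus.mFourier_neg]

lemma fCoeff_eq_setIntegral_mul_conj (f : (Fin d → ℝ) → ℂ) (k : Fin d → ℤ) :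
    fCoeff d f k = ∫ x in cube d, f x * starRingEnd ℂ (eK d k x) := by
  simp only [conj_eK]
  simp [fCoeff, eK]

lemma fCoeff_comp_coe (g : UnitAddTorus (Fin d) → ℂ) (k : Fin d → ℤ) :
    fCoeff d (fun x => g fun i => x i) k = UnitAddTorus.mFourierCoeff g k := by
  have h_ae : {x : Fin d → ℝ | ∀ i, x i ∈ Set.Ioc (0 : ℝ) (0 + 1)} =ᵐ[volume] cube d := by
    have : {x : Fin d → ℝ | ∀ i, x i ∈ Set.Ioc (0 : ℝ) (0 + 1)} =
        Set.univ.pi fun _ => Set.Ioc 0 1 := by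
      ext
      simp
    rw [this, cube, Set.pi_univ_Icc]
    exact Measure.univ_pi_Ioc_ae_eq_Icc
  rw [UnitAddTorus.mFourierCoeff_eq_integral g k 0, fCoeff_eq_setIntegral_mul_conj]
  refine .trans ?_ (setIntegral_congr_set h_ae).symm
  simp only [conj_eK, smul_eq_mul, mul_comm]
  simp only [eK_eq_mFourier]

lemma fCoeff_eK (k l : Fin d → ℤ) : fCoeff d (eK d k) l = if k = l then 1 else 0 := by
  have h_comp : eK d k = fun x => UnitAddTorus.mFourier k fun i => (x i : UnitAddCircle) :=
    funext (eK_eq_mFourier k)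
  have h_repr : UnitAddTorus.mFourierCoeff (UnitAddTorus.mFourier k) l =
      UnitAddTorus.mFourierBasis.repr (UnitAddTorus.mFourierBasis k) l := by
    rw [UnitAddTorus.mFourierBasis_repr, UnitAddTorus.coe_mFourierBasis,
      UnitAddTorus.mFourierCoeff_toLp]
  rw [h_comp, fCoeff_comp_coe, h_repr, HilbertBasis.repr_self, lp.single_apply]
  simp [Pi.single_apply, eq_comm]

end Characters

section TrigonometricPolynomials

variable {d : ℕ} (Λ : Finset (Fin d → ℤ))

/-- The trigonometric polynomial `∑_{k ∈ Λ} cₖ e^{2πi⟨k,x⟩}` with frequencies in `Λ`, as a linear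
function of its coefficients. These carry the Euclidean norm, which is the `L₂`-norm on the cube of
the polynomial. -/
def trigPoly : EuclideanSpace ℂ Λ →ₗ[ℂ] (Fin d → ℝ) → ℂ :=
  Fintype.linearCombination ℂ (fun k : Λ => eK d k) ∘ₗ (WithLp.linearEquiv 2 ℂ (Λ → ℂ)).toLinearMap

variable {Λ} (c : EuclideanSpace ℂ Λ)

lemma trigPoly_apply (x : Fin d → ℝ) : trigPoly Λ c x = ∑ k : Λ, c k * eK d k x := by
  simp [trigPoly, Fintype.linearCombination_apply]

@[fun_prop]
lemma continuous_trigPoly : Continuous (trigPoly Λ c) := by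
  simp only [funext (trigPoly_apply c)]
  fun_prop

lemma periodic1_trigPoly : Periodic1 d (trigPoly Λ c) := fun x i => by
  simp only [trigPoly_apply, periodic1_eK _ x i]

lemma fCoeff_trigPoly (l : Fin d → ℤ) :
    fCoeff d (trigPoly Λ c) l = ∑ k : Λ, if (k : Fin d → ℤ) = l then c k else 0 := by
  have h_int : ∀ k ∈ (univ : Finset Λ),
      IntegrableOn (fun x => c k * (eK d k x * starRingEnd ℂ (eK d l x))) (cube d) :=
    fun _ _ => integrableOn_cube (by fun_prop)
  simp only [fCoeff_eq_setIntegral_mul_conj, trigPoly_apply, sum_mul, mul_assoc]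
  rw [integral_finsetSum _ h_int]
  simp only [integral_const_mul, ← fCoeff_eq_setIntegral_mul_conj, fCoeff_eK, mul_ite, mul_one,
    mul_zero]

lemma fCoeff_trigPoly_coe (l : Λ) : fCoeff d (trigPoly Λ c) l = c l := by
  simp [fCoeff_trigPoly]

lemma fCoeff_trigPoly_of_notMem {l : Fin d → ℤ} (hl : l ∉ Λ) : fCoeff d (trigPoly Λ c) l = 0 := by
  rw [fCoeff_trigPoly]
  exact sum_eq_zero fun k _ => if_neg (ne_of_mem_of_not_mem k.2 hl)

lemma setIntegral_norm_sq_trigPoly : ∫ x in cube d, ‖trigPoly Λ c x‖ ^ 2 = ‖c‖ ^ 2 := by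
  have h_int : ∀ k ∈ (univ : Finset Λ), IntegrableOn
      (fun x => starRingEnd ℂ (c k) * (trigPoly Λ c x * starRingEnd ℂ (eK d k x))) (cube d) :=
    fun _ _ => integrableOn_cube (by fun_prop)
  have h_expand : ∀ x, ((‖trigPoly Λ c x‖ ^ 2 : ℝ) : ℂ) =
      ∑ k : Λ, starRingEnd ℂ (c k) * (trigPoly Λ c x * starRingEnd ℂ (eK d k x)) := fun x => by
    rw [Complex.ofReal_pow, ← Complex.mul_conj']
    nth_rewrite 2 [trigPoly_apply]
    simp only [map_sum, map_mul, mul_sum, mul_left_comm]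
  apply Complex.ofReal_injective
  rw [← integral_complex_ofReal]
  simp only [h_expand]
  rw [integral_finsetSum _ h_int, EuclideanSpace.norm_sq_eq, Complex.ofReal_sum]
  simp only [integral_const_mul, ← fCoeff_eq_setIntegral_mul_conj, fCoeff_trigPoly_coe,
    Complex.conj_mul', Complex.ofReal_pow]

lemma trigPoly_mem_FdLog (hΛ : ∀ k ∈ Λ, logWeight d k = 1) (hc : ∑ k, ‖c k‖ ≤ 1) :
    trigPoly Λ c ∈ FdLog d := by
  have h_supp : ∀ k ∉ Λ, ‖fCoeff d (trigPoly Λ c) k‖ * logWeight d k = 0 := fun k hk => by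
    rw [fCoeff_trigPoly_of_notMem c hk, norm_zero, zero_mul]
  refine ⟨continuous_trigPoly c, periodic1_trigPoly c, summable_of_ne_finset_zero h_supp, ?_⟩
  calc ∑' k, ‖fCoeff d (trigPoly Λ c) k‖ * logWeight d k
      = ∑ k : Λ, ‖fCoeff d (trigPoly Λ c) k‖ * logWeight d k := by
        rw [tsum_eq_sum h_supp,
          sum_coe_sort Λ fun k => ‖fCoeff d (trigPoly Λ c) k‖ * logWeight d k]
    _ = ∑ k, ‖c k‖ :=
        sum_congr rfl fun k _ => by rw [fCoeff_trigPoly_coe, hΛ k k.2, mul_one]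
    _ ≤ 1 := hc

lemma exists_mem_sqrt_finrank_div_card_le_norm_trigPoly (W : Submodule ℂ (EuclideanSpace ℂ Λ)) :
    ∃ c ∈ W, ∑ k, ‖c k‖ ≤ 1 ∧
      ∃ x ∈ cube d, √(Module.finrank ℂ W / #Λ) ≤ ‖trigPoly Λ c x‖ := by
  obtain ⟨v, hvW, hv, x, hx, hvx⟩ := exists_mem_sqrt_finrank_le_norm_apply (volume_cube d)
    (trigPoly Λ) W fun c _ => setIntegral_norm_sq_trigPoly c
  set r := (√(#Λ))⁻¹
  have hr : ‖(r : ℂ)‖ = r := Complex.norm_of_nonneg (by positivity)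
  refine ⟨(r : ℂ) • v, W.smul_mem _ hvW, ?_, x, hx, ?_⟩
  · calc ∑ k, ‖((r : ℂ) • v) k‖ = r * ∑ k, ‖v k‖ := by
          simp only [PiLp.smul_apply, norm_smul, hr, mul_sum]
      _ ≤ r * (√(Fintype.card Λ) * ‖v‖) := by
          gcongr
          exact sum_norm_le_sqrt_card_mul_norm v
      _ ≤ r * (√(#Λ) * 1) := by
          rw [Fintype.card_coe]
          gcongr
      _ ≤ 1 := by
          rw [mul_one]
          exact inv_mul_le_one
  · rw [map_smul, Pi.smul_apply, norm_smul, hr, sqrt_div (Nat.cast_nonneg _), div_eq_inv_mul]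
    gcongr

end TrigonometricPolynomials

lemma exists_mem_FdLog_le_eLpNorm_sub_infoVec {d n : ℕ} {Λ : Finset (Fin d → ℤ)}
    (hΛ : Λ.Nonempty) (h_weight : ∀ k ∈ Λ, logWeight d k = 1) {ε : ℝ}
    (hn : (n : ℝ) ≤ (1 - ε ^ 2) * #Λ)
    (L : (i : Fin n) → (Fin i.1 → ℂ) → (((Fin d → ℝ) → ℂ) →ₗ[ℂ] ℂ))
    (φ : (Fin n → ℂ) → ((Fin d → ℝ) → ℂ)) :
    ∃ f ∈ FdLog d, ENNReal.ofReal ε ≤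
      eLpNorm (fun t => f t - φ (infoVec L f) t) ⊤ (volume.restrict (cube d)) := by
  let T : EuclideanSpace ℂ Λ →ₗ[ℂ] Fin n → ℂ := LinearMap.pi fun i => L i 0 ∘ₗ trigPoly Λ
  obtain ⟨c, hcT, hc, x, hx, hcx⟩ := exists_mem_sqrt_finrank_div_card_le_norm_trigPoly T.ker
  have h_finrank : (#Λ : ℝ) ≤ n + Module.finrank ℂ T.ker := by
    have h_rank := T.finrank_range_add_finrank_ker
    have h_range := T.range.finrank_le
    rw [finrank_euclideanSpace, Fintype.card_coe] at h_rank
    rw [Module.finrank_fin_fun] at h_range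
    exact_mod_cast (by omega : #Λ ≤ n + Module.finrank ℂ T.ker)
  have h_peak : ε ≤ ‖trigPoly Λ c x‖ := by
    refine (le_sqrt_of_sq_le ?_).trans hcx
    rw [le_div_iff₀ (by exact_mod_cast hΛ.card_pos)]
    linarith
  have h_neg : -trigPoly Λ c ∈ FdLog d := by
    rw [← map_neg]
    exact trigPoly_mem_FdLog (-c) h_weight (by simpa using hc)
  obtain ⟨f, hf, h_error⟩ := exists_eLpNorm_top_le_sub_infoVec (μ := volume.restrict (cube d))
    (trigPoly_mem_FdLog c h_weight hc) h_neg (fun i => congrFun hcT i) φ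
  refine ⟨f, hf, le_trans ?_ h_error⟩
  calc ENNReal.ofReal ε ≤ ‖trigPoly Λ c x‖ₑ := by
        rw [← ofReal_norm]
        exact ENNReal.ofReal_le_ofReal h_peak
    _ ≤ eLpNorm (trigPoly Λ c) ⊤ (volume.restrict (cube d)) :=
        enorm_le_eLpNorm_top_restrict (continuous_trigPoly c).continuousOn
          (cube_subset_closure_interior d) hx

lemma logWeight_eq_one_of_mem_Icc {d : ℕ} {k : Fin d → ℤ} (hk : k ∈ Icc (-2) 2) :
    logWeight d k = 1 := by
  have h_sup : (univ.sup fun i => (k i).natAbs) ≤ 2 := by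
    refine Finset.sup_le fun i _ => ?_
    have h_lower : -2 ≤ k i := (mem_Icc.mp hk).1 i
    have h_upper : k i ≤ 2 := (mem_Icc.mp hk).2 i
    omega
  refine max_eq_left ?_
  obtain h_zero | h_pos := (univ.sup fun i => (k i).natAbs).eq_zero_or_pos
  · simp [h_zero]
  · have h_log := log_le_sub_one_of_pos (Nat.cast_pos (α := ℝ).mpr h_pos)
    have h_cast : ((univ.sup fun i => (k i).natAbs : ℕ) : ℝ) ≤ 2 := by exact_mod_cast h_sup
    linarith

lemma card_Icc_neg_two_two (d : ℕ) : #(Icc (-2) 2 : Finset (Fin d → ℤ)) = 5 ^ d := by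
  simp [Pi.card_Icc]

theorem statement11_general (d n : ℕ) {ε : ℝ} (hn : (n : ℝ) ≤ (1 - ε ^ 2) * 5 ^ d) :
    (∀ (L : (i : Fin n) → (Fin i.1 → ℂ) → (((Fin d → ℝ) → ℂ) →ₗ[ℂ] ℂ))
        (φ : (Fin n → ℂ) → ((Fin d → ℝ) → ℂ)),
        ∃ f ∈ FdLog d, ENNReal.ofReal ε ≤
          eLpNorm (fun t => f t - φ (infoVec L f) t) ⊤ (volume.restrict (cube d))) ∧
    (∀ (x : Fin n → (Fin d → ℝ)) (φ : (Fin n → ℂ) → ((Fin d → ℝ) → ℂ)),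
        ∃ f ∈ FdLog d, ENNReal.ofReal ε ≤
          eLpNorm (fun t => f t - φ (fun i => f (x i)) t) ⊤ (volume.restrict (cube d))) := by
  have h_card : (#(Icc (-2) 2 : Finset (Fin d → ℤ)) : ℝ) = 5 ^ d := by
    exact_mod_cast card_Icc_neg_two_two d
  have h_nonempty : (Icc (-2) 2 : Finset (Fin d → ℤ)).Nonempty :=
    card_pos.mp (by rw [card_Icc_neg_two_two]; positivity)
  have h_adaptive := exists_mem_FdLog_le_eLpNorm_sub_infoVec h_nonempty
    (fun k => logWeight_eq_one_of_mem_Icc) (h_card ▸ hn)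
  refine ⟨h_adaptive, fun x φ => ?_⟩
  simpa only [infoVec_const, LinearMap.proj_apply] using
    h_adaptive (fun i _ => LinearMap.proj (x i)) φ

/-- Corollary `cor:uniform`: recovery in the uniform norm on `F_d^log`
suffers from the curse of dimensionality, even for algorithms using arbitrary adaptive
linear information: whenever `n ≤ 5^d/2`, any algorithm `f ↦ φ(L₁(f),…,Lₙ(f))` built from
adaptively chosen linear functionals has worst-case `L_∞`-error at least `1/√2` on
`F_d^log`; in particular the same holds for any sampling algorithm with `n` points. -/
theorem statement11 :
    ∀ (d n : ℕ), 1 ≤ d → (n : ℝ) ≤ 5 ^ d / 2 →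
      ((∀ (L : (i : Fin n) → (Fin i.1 → ℂ) → (((Fin d → ℝ) → ℂ) →ₗ[ℂ] ℂ))
          (φ : (Fin n → ℂ) → ((Fin d → ℝ) → ℂ)),
          ∃ f ∈ FdLog d,
            ENNReal.ofReal (1 / Real.sqrt 2) ≤
              eLpNorm (fun t => f t - φ (infoVec L f) t) ⊤ (volume.restrict (cube d))) ∧
      (∀ (x : Fin n → (Fin d → ℝ)) (φ : (Fin n → ℂ) → ((Fin d → ℝ) → ℂ)),
          ∃ f ∈ FdLog d,
            ENNReal.ofReal (1 / Real.sqrt 2) ≤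
              eLpNorm (fun t => f t - φ (fun i => f (x i)) t) ⊤ (volume.restrict (cube d)))) := by
  intro d n _ hn
  refine statement11_general d n ?_
  rw [div_pow, sq_sqrt zero_le_two]
  linarith
end
end

section
/- Let d ≥ 2, s > 1/2, K > 0, and let γ = (γ_i) be product weights with 1 ≥ γ₁ ≥ γ₂ ≥ … > 0 satisfying ∑_{i=1}^d γ_i ≤ K log(d). Then there exist constants C, q > 0, depending only on K and s, such that H^{s,d,γ} ⊂ C d^q · F^{s,d}_mix; that is, every f in the weighted Korobov unit ball H^{s,d,γ} satisfies ∑_{k∈ℤ^d} |f̂(k)| ≤ C d^q and ∑_{k∈ℤ^d} |f̂(k)|² ∏_{i=1}^d max(1, |k_i|^{2s}) ≤ (C d^q)². -/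
/-!
Cauchy–Schwarz bounds `(∑ |f̂(k)|)²` by the squared Korobov norm of `f` times the sum of the
reciprocal Korobov weights. The latter factorises over the coordinates, and each one-dimensional
factor is at most `1 + γᵢ ζ`, where `ζ = ∑_{n ≠ 0} |n|^{-2s}`. Hence the product is at most
`exp (ζ ∑ γᵢ)`, which under `∑ γᵢ ≤ K log d` is at most `d ^ (K ζ)`. The mixed norm needs no
summation at all: for `γᵢ ≤ 1` the Korobov weight dominates the mixed weight.
-/

open MeasureTheory Real Finset

noncomputable section

/-- The mixed-smoothness weight `∏_{i=1}^d max(1, |k_i|^{2s})`. -/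
def wMix (s : ℝ) (d : ℕ) (k : Fin d → ℤ) : ℝ :=
  ∏ i, max 1 (|(k i : ℝ)| ^ (2 * s))

/-- The unit ball `H^{s,d}_mix` of the Sobolev space of mixed smoothness `s`
(unweighted Korobov space). -/
def Hmix (s : ℝ) (d : ℕ) : Set ((Fin d → ℝ) → ℂ) :=
  {f | Continuous f ∧ Periodic1 d f ∧
    Summable (fun k : Fin d → ℤ => ‖fCoeff d f k‖ ^ 2 * wMix s d k) ∧
    ∑' k : Fin d → ℤ, ‖fCoeff d f k‖ ^ 2 * wMix s d k ≤ 1}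

/-- The class `F^{s,d}_mix` of functions in `H^{s,d}_mix` with absolutely summable
Fourier coefficients, `∑_k |f̂(k)| ≤ 1`. -/
def Fmix (s : ℝ) (d : ℕ) : Set ((Fin d → ℝ) → ℂ) :=
  {f | f ∈ Hmix s d ∧ Summable (fun k : Fin d → ℤ => ‖fCoeff d f k‖) ∧
    ∑' k : Fin d → ℤ, ‖fCoeff d f k‖ ≤ 1}

/-- The weighted Korobov weight `∏_{i=1}^d max(1, γ_i⁻¹ |k_i|^{2s})`. -/
def wKor (s : ℝ) (d : ℕ) (γ : Fin d → ℝ) (k : Fin d → ℤ) : ℝ :=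
  ∏ i, max 1 ((γ i)⁻¹ * |(k i : ℝ)| ^ (2 * s))

/-- The weighted Korobov unit ball `H^{s,d,γ}`. -/
def HKor (s : ℝ) (d : ℕ) (γ : Fin d → ℝ) : Set ((Fin d → ℝ) → ℂ) :=
  {f | Continuous f ∧ Periodic1 d f ∧
    Summable (fun k : Fin d → ℤ => ‖fCoeff d f k‖ ^ 2 * wKor s d γ k) ∧
    ∑' k : Fin d → ℤ, ‖fCoeff d f k‖ ^ 2 * wKor s d γ k ≤ 1}

section Series

variable {ι : Type*}

lemma summable_of_sq_le_mul {r f g : ι → ℝ} (hf : ∀ i, 0 ≤ f i) (hg : ∀ i, 0 ≤ g i)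
    (h : ∀ i, r i ^ 2 ≤ f i * g i) (hfs : Summable f) (hgs : Summable g) : Summable r := by
  refine .of_norm_bounded (hfs.add hgs) fun i ↦ ?_
  have two_mul_abs_le : 2 * |r i| ≤ f i + g i :=
    two_mul_le_add_of_sq_le_mul (hf i) (hg i) ((sq_abs _).trans_le (h i))
  rw [norm_eq_abs]
  linarith [abs_nonneg (r i)]

lemma sq_tsum_le_tsum_mul_tsum_of_sq_le_mul {r f g : ι → ℝ} (hf : ∀ i, 0 ≤ f i)
    (hg : ∀ i, 0 ≤ g i) (h : ∀ i, r i ^ 2 ≤ f i * g i) (hfs : Summable f) (hgs : Summable g) :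
    (∑' i, r i) ^ 2 ≤ (∑' i, f i) * ∑' i, g i :=
  have hrs : Summable r := summable_of_sq_le_mul hf hg h hfs hgs
  le_of_tendsto_of_tendsto' (hrs.hasSum.pow 2) (Filter.Tendsto.mul hfs.hasSum hgs.hasSum) fun t ↦
    t.sum_sq_le_sum_mul_sum_of_sq_le_mul (fun i _ ↦ hf i) (fun i _ ↦ hg i) fun i _ ↦ h i

variable [Fintype ι] {κ : ι → Type*} {u : ∀ i, κ i → ℝ}

lemma sum_prod_apply_le_prod_tsum (hu : ∀ i n, 0 ≤ u i n) (hus : ∀ i, Summable (u i))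
    (t : Finset (∀ i, κ i)) : ∑ k ∈ t, ∏ i, u i (k i) ≤ ∏ i, ∑' n, u i n := by
  classical
  let box : Finset (∀ i, κ i) := Fintype.piFinset fun i ↦ t.image fun k ↦ k i
  have subset_box : t ⊆ box := fun k hk ↦
    Fintype.mem_piFinset.2 fun i ↦ mem_image_of_mem (fun k ↦ k i) hk
  calc ∑ k ∈ t, ∏ i, u i (k i)
      ≤ ∑ k ∈ box, ∏ i, u i (k i) :=
        sum_le_sum_of_subset_of_nonneg subset_box fun k _ _ ↦ prod_nonneg fun i _ ↦ hu i (k i)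
    _ = ∏ i, ∑ n ∈ t.image fun k ↦ k i, u i n := (prod_univ_sum _ _).symm
    _ ≤ ∏ i, ∑' n, u i n :=
        prod_le_prod (fun i _ ↦ sum_nonneg fun n _ ↦ hu i n) fun i _ ↦
          (hus i).sum_le_tsum _ fun n _ ↦ hu i n

lemma summable_prod_apply (hu : ∀ i n, 0 ≤ u i n) (hus : ∀ i, Summable (u i)) :
    Summable fun k : ∀ i, κ i ↦ ∏ i, u i (k i) :=
  summable_of_sum_le (fun k ↦ prod_nonneg fun i _ ↦ hu i (k i))
    (sum_prod_apply_le_prod_tsum hu hus)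

lemma tsum_prod_apply_le_prod_tsum (hu : ∀ i n, 0 ≤ u i n) (hus : ∀ i, Summable (u i)) :
    ∑' k : ∀ i, κ i, ∏ i, u i (k i) ≤ ∏ i, ∑' n, u i n :=
  Real.tsum_le_of_sum_le (fun k ↦ prod_nonneg fun i _ ↦ hu i (k i))
    (sum_prod_apply_le_prod_tsum hu hus)

end Series

/-- The sum of `|n|⁻ˢ` over the nonzero integers, that is `2 ζ(s)`, for `s > 1`. The term `n = 0`
need not be excluded: it vanishes because `0 ^ (-s) = 0` in Lean for `s ≠ 0`. -/
def intZeta (s : ℝ) : ℝ := ∑' n : ℤ, |(n : ℝ)| ^ (-s)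

/-- The one-dimensional factor `max(1, g⁻¹ |n|ˢ)` of the Korobov weight `wKor`, with `g` for `γᵢ`
and with `s` for the exponent `2s` used there. -/
def korobovFactor (s g : ℝ) (n : ℤ) : ℝ := max 1 (g⁻¹ * |(n : ℝ)| ^ s)

lemma intZeta_pos {s : ℝ} (hs : 1 < s) : 0 < intZeta s :=
  (summable_abs_int_rpow hs).tsum_pos (fun n ↦ by positivity) 1 (by simp)

section KorobovFactor

variable {s g : ℝ}

lemma korobovFactor_pos (n : ℤ) : 0 < korobovFactor s g n :=
  one_pos.trans_le (le_max_left _ _)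

lemma inv_korobovFactor_nonneg (n : ℤ) : 0 ≤ (korobovFactor s g n)⁻¹ :=
  (inv_pos.2 (korobovFactor_pos n)).le

lemma inv_korobovFactor_le (hg : 0 < g) (n : ℤ) :
    (korobovFactor s g n)⁻¹ ≤ (if n = 0 then 1 else 0) + g * |(n : ℝ)| ^ (-s) := by
  split_ifs with hn
  · have : (korobovFactor s g n)⁻¹ ≤ 1 := inv_le_one_of_one_le₀ (le_max_left _ _)
    exact this.trans (le_add_of_nonneg_right (by positivity))
  · have : 0 < |(n : ℝ)| := by positivity
    calc (korobovFactor s g n)⁻¹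
        ≤ (g⁻¹ * |(n : ℝ)| ^ s)⁻¹ := inv_anti₀ (by positivity) (le_max_right _ _)
      _ = 0 + g * |(n : ℝ)| ^ (-s) := by rw [zero_add, mul_inv, inv_inv, rpow_neg this.le]

lemma summable_inv_korobovFactor (hs : 1 < s) (hg : 0 < g) :
    Summable fun n ↦ (korobovFactor s g n)⁻¹ :=
  .of_nonneg_of_le inv_korobovFactor_nonneg (inv_korobovFactor_le hg)
    ((hasSum_ite_eq 0 1).summable.add ((summable_abs_int_rpow hs).mul_left g))

lemma tsum_inv_korobovFactor_le (hs : 1 < s) (hg : 0 < g) :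
    ∑' n, (korobovFactor s g n)⁻¹ ≤ 1 + g * intZeta s :=
  hasSum_le (inv_korobovFactor_le hg) (summable_inv_korobovFactor hs hg).hasSum
    ((hasSum_ite_eq 0 1).add ((summable_abs_int_rpow hs).hasSum.mul_left g))

end KorobovFactor

section KorobovWeight

variable {s : ℝ} {d : ℕ} {γ : Fin d → ℝ}

lemma wMix_nonneg (k : Fin d → ℤ) : 0 ≤ wMix s d k :=
  prod_nonneg fun _ _ ↦ zero_le_one.trans (le_max_left _ _)

lemma wKor_pos (k : Fin d → ℤ) : 0 < wKor s d γ k :=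
  prod_pos fun _ _ ↦ one_pos.trans_le (le_max_left _ _)

lemma inv_wKor (k : Fin d → ℤ) :
    (wKor s d γ k)⁻¹ = ∏ i, (korobovFactor (2 * s) (γ i) (k i))⁻¹ := by
  rw [prod_inv_distrib]
  rfl

lemma wMix_le_wKor (hγ₀ : ∀ i, 0 < γ i) (hγ₁ : ∀ i, γ i ≤ 1) (k : Fin d → ℤ) :
    wMix s d k ≤ wKor s d γ k :=
  prod_le_prod (fun _ _ ↦ zero_le_one.trans (le_max_left _ _)) fun i _ ↦
    max_le_max_left 1 (le_mul_of_one_le_left (by positivity) ((one_le_inv₀ (hγ₀ i)).2 (hγ₁ i)))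

lemma summable_inv_wKor (hs : 1 / 2 < s) (hγ : ∀ i, 0 < γ i) :
    Summable fun k ↦ (wKor s d γ k)⁻¹ := by
  simp only [inv_wKor]
  exact summable_prod_apply (u := fun i n ↦ (korobovFactor (2 * s) (γ i) n)⁻¹)
    (fun _ ↦ inv_korobovFactor_nonneg) fun i ↦
      summable_inv_korobovFactor (by linarith) (hγ i)

lemma tsum_inv_wKor_le_exp (hs : 1 / 2 < s) (hγ : ∀ i, 0 < γ i) :
    ∑' k, (wKor s d γ k)⁻¹ ≤ exp ((∑ i, γ i) * intZeta (2 * s)) := by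
  have hs' : 1 < 2 * s := by linarith
  simp only [inv_wKor]
  calc ∑' k : Fin d → ℤ, ∏ i, (korobovFactor (2 * s) (γ i) (k i))⁻¹
      ≤ ∏ i, ∑' n, (korobovFactor (2 * s) (γ i) n)⁻¹ :=
        tsum_prod_apply_le_prod_tsum (fun _ ↦ inv_korobovFactor_nonneg) fun i ↦
          summable_inv_korobovFactor hs' (hγ i)
    _ ≤ ∏ i, (1 + γ i * intZeta (2 * s)) :=
        prod_le_prod (fun _ _ ↦ tsum_nonneg inv_korobovFactor_nonneg) fun i _ ↦
          tsum_inv_korobovFactor_le hs' (hγ i)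
    _ ≤ exp (∑ i, γ i * intZeta (2 * s)) :=
        prod_one_add_le_exp_sum _ fun i ↦ (mul_pos (hγ i) (intZeta_pos hs')).le
    _ = exp ((∑ i, γ i) * intZeta (2 * s)) := by rw [sum_mul]

variable {E : Type*} [SeminormedAddCommGroup E] {a : (Fin d → ℤ) → E}

lemma sq_norm_eq_mul_inv_wKor (k : Fin d → ℤ) :
    ‖a k‖ ^ 2 = ‖a k‖ ^ 2 * wKor s d γ k * (wKor s d γ k)⁻¹ :=
  (mul_inv_cancel_right₀ (wKor_pos k).ne' _).symm

lemma sq_norm_mul_wKor_nonneg (k : Fin d → ℤ) : 0 ≤ ‖a k‖ ^ 2 * wKor s d γ k :=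
  mul_nonneg (sq_nonneg _) (wKor_pos k).le

lemma summable_norm_of_summable_wKor (hs : 1 / 2 < s) (hγ : ∀ i, 0 < γ i)
    (ha : Summable fun k ↦ ‖a k‖ ^ 2 * wKor s d γ k) : Summable fun k ↦ ‖a k‖ :=
  summable_of_sq_le_mul sq_norm_mul_wKor_nonneg
    (fun k ↦ (inv_pos.2 (wKor_pos k)).le) (fun k ↦ (sq_norm_eq_mul_inv_wKor k).le) ha
    (summable_inv_wKor hs hγ)

lemma sq_tsum_norm_le_of_summable_wKor (hs : 1 / 2 < s) (hγ : ∀ i, 0 < γ i)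
    (ha : Summable fun k ↦ ‖a k‖ ^ 2 * wKor s d γ k) :
    (∑' k, ‖a k‖) ^ 2 ≤
      (∑' k, ‖a k‖ ^ 2 * wKor s d γ k) * exp ((∑ i, γ i) * intZeta (2 * s)) :=
  calc (∑' k, ‖a k‖) ^ 2
      ≤ (∑' k, ‖a k‖ ^ 2 * wKor s d γ k) * ∑' k, (wKor s d γ k)⁻¹ :=
        sq_tsum_le_tsum_mul_tsum_of_sq_le_mul sq_norm_mul_wKor_nonneg
          (fun k ↦ (inv_pos.2 (wKor_pos k)).le) (fun k ↦ (sq_norm_eq_mul_inv_wKor k).le) ha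
          (summable_inv_wKor hs hγ)
    _ ≤ _ := mul_le_mul_of_nonneg_left (tsum_inv_wKor_le_exp hs hγ)
        (tsum_nonneg sq_norm_mul_wKor_nonneg)

lemma summable_wMix_of_summable_wKor (hγ₀ : ∀ i, 0 < γ i) (hγ₁ : ∀ i, γ i ≤ 1)
    (ha : Summable fun k ↦ ‖a k‖ ^ 2 * wKor s d γ k) :
    Summable fun k ↦ ‖a k‖ ^ 2 * wMix s d k :=
  .of_nonneg_of_le (fun k ↦ mul_nonneg (sq_nonneg _) (wMix_nonneg k))
    (fun k ↦ mul_le_mul_of_nonneg_left (wMix_le_wKor hγ₀ hγ₁ k) (sq_nonneg _)) ha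

lemma tsum_wMix_le_tsum_wKor (hγ₀ : ∀ i, 0 < γ i) (hγ₁ : ∀ i, γ i ≤ 1)
    (ha : Summable fun k ↦ ‖a k‖ ^ 2 * wKor s d γ k) :
    ∑' k, ‖a k‖ ^ 2 * wMix s d k ≤ ∑' k, ‖a k‖ ^ 2 * wKor s d γ k :=
  (summable_wMix_of_summable_wKor hγ₀ hγ₁ ha).tsum_le_tsum
    (fun k ↦ mul_le_mul_of_nonneg_left (wMix_le_wKor hγ₀ hγ₁ k) (sq_nonneg _)) ha

end KorobovWeight

lemma exp_mul_le_rpow_of_le_mul_log {x K z y : ℝ} (hy : 0 < y) (hz : 0 ≤ z)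
    (hx : x ≤ K * log y) : exp (x * z) ≤ y ^ (K * z) := by
  rw [rpow_def_of_pos hy, exp_le_exp]
  linarith [mul_le_mul_of_nonneg_right hx hz]

theorem statement12_general {E : Type*} [SeminormedAddCommGroup E] {s K : ℝ} (hs : 1 / 2 < s)
    (hK : 0 < K) :
    ∃ C q : ℝ, 0 < C ∧ 0 < q ∧
      ∀ (d : ℕ), 1 ≤ d →
        ∀ γ : Fin d → ℝ,
          (∀ i, 0 < γ i) → (∀ i, γ i ≤ 1) →
          (∑ i, γ i) ≤ K * Real.log d →
          ∀ a : (Fin d → ℤ) → E,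
            Summable (fun k ↦ ‖a k‖ ^ 2 * wKor s d γ k) →
            ∑' k, ‖a k‖ ^ 2 * wKor s d γ k ≤ 1 →
            Summable (fun k ↦ ‖a k‖) ∧
            ∑' k, ‖a k‖ ≤ C * (d : ℝ) ^ q ∧
            Summable (fun k ↦ ‖a k‖ ^ 2 * wMix s d k) ∧
            ∑' k, ‖a k‖ ^ 2 * wMix s d k ≤ (C * (d : ℝ) ^ q) ^ 2 := by
  have hζ : 0 < intZeta (2 * s) := intZeta_pos (by linarith)
  refine ⟨1, K * intZeta (2 * s) / 2, one_pos, by positivity, ?_⟩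
  intro d hd γ hγ₀ hγ₁ hγK a ha ha₁
  have hd₁ : (1 : ℝ) ≤ d := Nat.one_le_cast.2 hd
  have sq_bound : ((d : ℝ) ^ (K * intZeta (2 * s) / 2)) ^ 2 = (d : ℝ) ^ (K * intZeta (2 * s)) := by
    rw [← rpow_mul_natCast d.cast_nonneg, Nat.cast_ofNat, div_mul_cancel₀ _ two_ne_zero]
  rw [one_mul, sq_bound]
  refine ⟨summable_norm_of_summable_wKor hs hγ₀ ha, ?_,
    summable_wMix_of_summable_wKor hγ₀ hγ₁ ha,
    (tsum_wMix_le_tsum_wKor hγ₀ hγ₁ ha).trans (ha₁.trans (one_le_rpow hd₁ (by positivity)))⟩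
  refine le_of_sq_le_sq ?_ (by positivity)
  calc (∑' k, ‖a k‖) ^ 2
      ≤ (∑' k, ‖a k‖ ^ 2 * wKor s d γ k) * exp ((∑ i, γ i) * intZeta (2 * s)) :=
        sq_tsum_norm_le_of_summable_wKor hs hγ₀ ha
    _ ≤ exp ((∑ i, γ i) * intZeta (2 * s)) := mul_le_of_le_one_left (exp_pos _).le ha₁
    _ ≤ (d : ℝ) ^ (K * intZeta (2 * s)) :=
        exp_mul_le_rpow_of_le_mul_log (one_pos.trans_le hd₁) hζ.le hγK
    _ = ((d : ℝ) ^ (K * intZeta (2 * s) / 2)) ^ 2 := sq_bound.symm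

/-- inclusion \eqref{eq:inclusion} of Remark `rem:weighted`: for `s > 1/2`
and `K > 0` there are `C, q > 0`, depending only on `K` and `s`, such that for all `d ≥ 2`
and all product weights `1 ≥ γ₁ ≥ γ₂ ≥ … > 0` with `∑_{i=1}^d γ_i ≤ K log d`, one has
`H^{s,d,γ} ⊂ C d^q F^{s,d}_mix`; i.e. every `f ∈ H^{s,d,γ}` satisfies
`∑_k |f̂(k)| ≤ C d^q` and `∑_k |f̂(k)|² ∏_i max(1,|k_i|^{2s}) ≤ (C d^q)²`. -/
theorem statement12 :
    ∀ (s K : ℝ), 1/2 < s → 0 < K →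
      ∃ C q : ℝ, 0 < C ∧ 0 < q ∧
        ∀ (d : ℕ), 2 ≤ d →
          ∀ γ : Fin d → ℝ,
            (∀ i, 0 < γ i) → (∀ i, γ i ≤ 1) →
            (∀ i j : Fin d, i ≤ j → γ j ≤ γ i) →
            (∑ i, γ i) ≤ K * Real.log d →
            ∀ f ∈ HKor s d γ,
              Summable (fun k : Fin d → ℤ => ‖fCoeff d f k‖) ∧
              (∑' k : Fin d → ℤ, ‖fCoeff d f k‖) ≤ C * (d : ℝ) ^ q ∧
              Summable (fun k : Fin d → ℤ => ‖fCoeff d f k‖ ^ 2 * wMix s d k) ∧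
              (∑' k : Fin d → ℤ, ‖fCoeff d f k‖ ^ 2 * wMix s d k) ≤ (C * (d : ℝ) ^ q) ^ 2 := by
  intro s K hs hK
  obtain ⟨C, q, hC, hq, bounds⟩ := statement12_general (E := ℂ) hs hK
  exact ⟨C, q, hC, hq, fun d hd γ hγ₀ hγ₁ _ hγK f ⟨_, _, hf, hf₁⟩ ↦
    bounds d (by lia) γ hγ₀ hγ₁ hγK (fCoeff d f) hf hf₁⟩
end
end
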